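/- For every integer k ≥ 2 and every set A of words over k satisfying limsup_{n→∞} |A ∩ [k]^n| / k^n > 0, there exist a word c over k and an infinite sequence (w_n)_{n∈ℕ} of left variable words over k such that the set {c} ∪ {c⌢w_0(a_0)⌢···⌢w_n(a_n) : n ∈ ℕ and a_0,…,a_n ∈ [k]} is contained in A. -/

import Mathlib

/-!
Words over `k` are elements of `List (Fin k)`.  Variable words over `k` are lists over
`Option (Fin k)` in which `none` (the variable `v`) occurs; a left variable word is one
whose leftmost letter is the variable.  `subst w a` substitutes `a` for every occurrence
of the variable.
-/

/-- A word over `k`: a finite sequence with values in `[k]`. -/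
abbrev Word (k : ℕ) := List (Fin k)

/-- A "possibly variable" letter sequence: `none` plays the role of the variable `v`. -/
abbrev VWord (k : ℕ) := List (Option (Fin k))

/-- Substitution of the letter `a` for every occurrence of the variable. -/
def subst {k : ℕ} (w : VWord k) (a : Fin k) : Word k := w.map (fun o => o.getD a)

/-- `w` is a left variable word: its leftmost letter is the variable `v`. -/
def IsLeftVar {k : ℕ} (w : VWord k) : Prop := w.head? = some none

/-- The word `c ⌢ w₀(a₀) ⌢ ⋯ ⌢ wₙ(aₙ)`. -/
def csWord {k : ℕ} (c : Word k) (ws : ℕ → VWord k) (n : ℕ) (a : ℕ → Fin k) : Word k :=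
  c ++ ((List.range (n + 1)).map fun i => subst (ws i) (a i)).flatten

/-- The set `{c} ∪ {c ⌢ w₀(a₀) ⌢ ⋯ ⌢ wₙ(aₙ) : n ∈ ℕ, a₀,…,aₙ ∈ [k]}`. -/
def csSetInf {k : ℕ} (c : Word k) (ws : ℕ → VWord k) : Set (Word k) :=
  insert c {x | ∃ n : ℕ, ∃ a : ℕ → Fin k, x = csWord c ws n a}

/-- The density `|A ∩ [k]^n| / k^n`. -/
noncomputable def dens (k n : ℕ) (A : Set (Word k)) : ℝ :=
  (Set.ncard {x ∈ A | x.length = n} : ℝ) / (k : ℝ) ^ n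

namespace DCS

open Filter Topology

/-! ### Finitely additive states -/

/-- A function is bounded. -/
def Bdd {S : Type} (f : S → ℝ) : Prop := ∃ C : ℝ, ∀ s, |f s| ≤ C

theorem Bdd.const {S : Type} (c : ℝ) : Bdd (fun _ : S => c) := ⟨|c|, fun _ => le_rfl⟩

theorem Bdd.add {S : Type} {f g : S → ℝ} (hf : Bdd f) (hg : Bdd g) :
    Bdd (fun s => f s + g s) := by
  obtain ⟨C, hC⟩ := hf
  obtain ⟨D, hD⟩ := hg
  exact ⟨C + D, fun s => (abs_add_le _ _).trans (add_le_add (hC s) (hD s))⟩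

theorem Bdd.neg {S : Type} {f : S → ℝ} (hf : Bdd f) : Bdd (fun s => - f s) := by
  obtain ⟨C, hC⟩ := hf
  exact ⟨C, fun s => by rw [abs_neg]; exact hC s⟩

theorem Bdd.sub {S : Type} {f g : S → ℝ} (hf : Bdd f) (hg : Bdd g) :
    Bdd (fun s => f s - g s) := by
  simpa [sub_eq_add_neg] using hf.add hg.neg

theorem Bdd.mul {S : Type} {f g : S → ℝ} (hf : Bdd f) (hg : Bdd g) :
    Bdd (fun s => f s * g s) := by
  obtain ⟨C, hC⟩ := hf
  obtain ⟨D, hD⟩ := hg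
  refine ⟨C * D, fun s => ?_⟩
  rw [abs_mul]
  exact mul_le_mul (hC s) (hD s) (abs_nonneg _) ((abs_nonneg _).trans (hC s))

theorem Bdd.sq {S : Type} {f : S → ℝ} (hf : Bdd f) : Bdd (fun s => (f s) ^ 2) := by
  simpa [pow_two] using hf.mul hf

theorem Bdd.abs {S : Type} {f : S → ℝ} (hf : Bdd f) : Bdd (fun s => |f s|) := by
  obtain ⟨C, hC⟩ := hf
  exact ⟨C, fun s => by rw [abs_abs]; exact hC s⟩

theorem Bdd.sum {S ι : Type} (t : Finset ι) {f : ι → S → ℝ} (hf : ∀ i, Bdd (f i)) :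
    Bdd (fun s => ∑ i ∈ t, f i s) := by
  classical
  induction t using Finset.induction_on with
  | empty => simpa using Bdd.const (S := S) 0
  | insert a t ha ih =>
    simp only [Finset.sum_insert ha]
    exact (hf a).add ih

theorem Bdd.prod {S ι : Type} (t : Finset ι) {f : ι → S → ℝ} (hf : ∀ i, Bdd (f i)) :
    Bdd (fun s => ∏ i ∈ t, f i s) := by
  classical
  induction t using Finset.induction_on with
  | empty => simpa using Bdd.const (S := S) 1
  | insert a t ha ih =>
    simp only [Finset.prod_insert ha]
    exact (hf a).mul ih

theorem Bdd.comp {S T : Type} {f : S → ℝ} (hf : Bdd f) (φ : T → S) : Bdd (fun s => f (φ s)) := by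
  obtain ⟨C, hC⟩ := hf
  exact ⟨C, fun s => hC _⟩

/-- Real valued indicator of a proposition. -/
noncomputable def ind (p : Prop) : ℝ := by
  classical exact if p then 1 else 0

theorem ind_true {p : Prop} (h : p) : ind p = 1 := by simp [ind, h]
theorem ind_false {p : Prop} (h : ¬ p) : ind p = 0 := by simp [ind, h]
theorem ind_nonneg (p : Prop) : 0 ≤ ind p := by unfold ind; split_ifs <;> norm_num
theorem ind_le_one (p : Prop) : ind p ≤ 1 := by unfold ind; split_ifs <;> norm_num
theorem ind_mono {p q : Prop} (h : p → q) : ind p ≤ ind q := by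
  by_cases hp : p
  · rw [ind_true hp, ind_true (h hp)]
  · rw [ind_false hp]; exact ind_nonneg _
theorem ind_and (p q : Prop) : ind (p ∧ q) = ind p * ind q := by
  by_cases hp : p <;> by_cases hq : q <;> simp [ind, hp, hq]
theorem ind_not (p : Prop) : ind (¬ p) = 1 - ind p := by
  by_cases hp : p <;> simp [ind, hp]
theorem ind_mul_self (p : Prop) : ind p * ind p = ind p := by
  by_cases hp : p <;> simp [ind, hp]
theorem ind_congr {p q : Prop} (h : p ↔ q) : ind p = ind q := by rw [propext h]

theorem Bdd.ind {S : Type} (p : S → Prop) : Bdd (fun s => ind (p s)) :=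
  ⟨1, fun s => by rw [abs_of_nonneg (ind_nonneg _)]; exact ind_le_one _⟩

/-- A finitely additive expectation. -/
structure State (S : Type) where
  lin : (S → ℝ) →ₗ[ℝ] ℝ
  one' : lin (fun _ => 1) = 1
  nonneg' : ∀ f : S → ℝ, Bdd f → (∀ s, 0 ≤ f s) → 0 ≤ lin f

namespace State

instance {S : Type} : CoeFun (State S) (fun _ => (S → ℝ) → ℝ) := ⟨fun E => E.lin⟩

variable {S T : Type} (E : State S)

theorem one : E (fun _ => 1) = 1 := E.one'
theorem nonneg {f : S → ℝ} (hf : Bdd f) (h : ∀ s, 0 ≤ f s) : 0 ≤ E f := E.nonneg' f hf h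
theorem add (f g : S → ℝ) : E (fun s => f s + g s) = E f + E g := map_add E.lin f g
theorem sub (f g : S → ℝ) : E (fun s => f s - g s) = E f - E g := map_sub E.lin f g
theorem neg (f : S → ℝ) : E (fun s => - f s) = - E f := map_neg E.lin f
theorem smul (c : ℝ) (f : S → ℝ) : E (fun s => c * f s) = c * E f := map_smul E.lin c f
theorem smul' (c : ℝ) (f : S → ℝ) : E (fun s => f s * c) = E f * c := by
  simp_rw [mul_comm _ c]; exact E.smul c f
theorem sum {ι : Type} (t : Finset ι) (f : ι → S → ℝ) :
    E (fun s => ∑ i ∈ t, f i s) = ∑ i ∈ t, E (f i) := by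
  have : (fun s => ∑ i ∈ t, f i s) = ∑ i ∈ t, f i := by ext s; simp
  rw [this]; exact map_sum E.lin f t
theorem const (c : ℝ) : E (fun _ => c) = c := by
  have := E.smul c (fun _ => 1)
  simpa [E.one] using this
theorem mono {f g : S → ℝ} (hf : Bdd f) (hg : Bdd g) (h : ∀ s, f s ≤ g s) : E f ≤ E g := by
  have := E.nonneg (hg.sub hf) (fun s => sub_nonneg.2 (h s))
  rw [E.sub] at this
  linarith
theorem le_of_le {f : S → ℝ} {c : ℝ} (hf : Bdd f) (h : ∀ s, f s ≤ c) : E f ≤ c := by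
  have := E.mono hf (Bdd.const c) h
  rwa [E.const] at this
theorem ge_of_ge {f : S → ℝ} {c : ℝ} (hf : Bdd f) (h : ∀ s, c ≤ f s) : c ≤ E f := by
  have := E.mono (Bdd.const c) hf h
  rwa [E.const] at this
theorem abs_le {f : S → ℝ} {c : ℝ} (h : ∀ s, |f s| ≤ c) : |E f| ≤ c := by
  have hf : Bdd f := ⟨c, h⟩
  exact _root_.abs_le.2 ⟨E.ge_of_ge hf fun s => (_root_.abs_le.1 (h s)).1,
    E.le_of_le hf fun s => (_root_.abs_le.1 (h s)).2⟩
theorem null_of_le {f g : S → ℝ} (hf : ∀ s, 0 ≤ f s) (hg : Bdd g) (h : ∀ s, f s ≤ g s)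
    (h0 : E g = 0) : E f = 0 := by
  have hb : Bdd f := by
    obtain ⟨C, hC⟩ := hg
    exact ⟨C, fun s => by rw [abs_of_nonneg (hf s)]; exact (h s).trans ((le_abs_self _).trans (hC s))⟩
  exact le_antisymm (h0 ▸ E.mono hb hg h) (E.nonneg hb hf)
theorem congr {f g : S → ℝ} (h : ∀ s, f s = g s) : E f = E g := by
  rw [show f = g from funext h]
theorem sq_le {f : S → ℝ} (hf : Bdd f) : (E f) ^ 2 ≤ E (fun s => (f s) ^ 2) := by
  have h := E.nonneg ((hf.sub (Bdd.const (E f))).sq) (fun s => sq_nonneg _)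
  have h2 : E (fun s => (f s - E f) ^ 2) = E (fun s => (f s)^2) - (E f)^2 := by
    have : (fun s => (f s - E f) ^ 2) = fun s => ((f s)^2 - (2 * E f) * f s) + (E f)^2 := by
      ext s; ring
    rw [this, E.add, E.sub, E.smul, E.const]; ring
  rw [h2] at h
  linarith

@[ext] theorem ext' {E F : State S} (h : ∀ f, E f = F f) : E = F := by
  cases E; cases F; congr; exact LinearMap.ext h

/-- Dirac state. -/
def pure (s : S) : State S where
  lin := LinearMap.proj s
  one' := rfl
  nonneg' := fun _ _ h => h s

@[simp] theorem pure_apply (s : S) (f : S → ℝ) : pure s f = f s := rfl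

/-- Pushforward. -/
def map (φ : S → T) (E : State S) : State T where
  lin := E.lin.comp (LinearMap.funLeft ℝ ℝ φ)
  one' := E.one
  nonneg' := fun f hf h => E.nonneg (hf.comp φ) (fun s => h _)

@[simp] theorem map_apply (φ : S → T) (E : State S) (f : T → ℝ) :
    map φ E f = E (fun s => f (φ s)) := rfl

/-- Mixture. -/
def bind (P : State T) (E : T → State S) : State S where
  lin := P.lin.comp (LinearMap.pi fun t => (E t).lin)
  one' := by
    have : (fun t => (E t) (fun _ => 1)) = fun _ => 1 := by ext t; exact (E t).one
    change P (fun t => (E t) (fun _ => 1)) = 1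
    rw [this]; exact P.one
  nonneg' := fun f hf h => by
    change 0 ≤ P (fun t => E t f)
    refine P.nonneg ?_ (fun t => (E t).nonneg hf h)
    obtain ⟨C, hC⟩ := hf
    exact ⟨C, fun t => (E t).abs_le hC⟩

@[simp] theorem bind_apply (P : State T) (E : T → State S) (f : S → ℝ) :
    bind P E f = P (fun t => E t f) := rfl

/-- Conditioning by a weight. -/
noncomputable def cond (E : State S) (h : S → ℝ) (hb : Bdd h) (h0 : ∀ s, 0 ≤ h s) (hp : 0 < E h) :
    State S where
  lin := (E h)⁻¹ • (E.lin.comp (LinearMap.pi fun s => h s • LinearMap.proj s))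
  one' := by
    change (E h)⁻¹ * E (fun s => h s * 1) = 1
    simp only [mul_one]
    exact inv_mul_cancel₀ hp.ne'
  nonneg' := fun f hf hf0 => by
    change 0 ≤ (E h)⁻¹ * E (fun s => h s * f s)
    exact mul_nonneg (inv_nonneg.2 hp.le) (E.nonneg (hb.mul hf) fun s => mul_nonneg (h0 s) (hf0 s))

theorem cond_apply (E : State S) (h : S → ℝ) (hb : Bdd h) (h0 : ∀ s, 0 ≤ h s) (hp : 0 < E h)
    (f : S → ℝ) : cond E h hb h0 hp f = (E h)⁻¹ * E (fun s => h s * f s) := rfl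

theorem cond_mul (E : State S) (h : S → ℝ) (hb : Bdd h) (h0 : ∀ s, 0 ≤ h s) (hp : 0 < E h)
    (f : S → ℝ) : E h * cond E h hb h0 hp f = E (fun s => h s * f s) := by
  rw [cond_apply, mul_inv_cancel_left₀ hp.ne']

theorem cond_null (E : State S) (h : S → ℝ) (hb : Bdd h) (h0 : ∀ s, 0 ≤ h s) (hp : 0 < E h)
    (f : S → ℝ) (hf : Bdd f) (hf0 : ∀ s, 0 ≤ f s) (hE : E f = 0) : cond E h hb h0 hp f = 0 := by
  rw [cond_apply]
  obtain ⟨C, hC⟩ := hb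
  have : E (fun s => h s * f s) = 0 := by
    apply E.null_of_le (g := fun s => C * f s) (fun s => mul_nonneg (h0 s) (hf0 s))
      ((Bdd.const C).mul hf)
    · intro s
      exact mul_le_mul_of_nonneg_right ((le_abs_self _).trans (hC s)) (hf0 s)
    · rw [E.smul, hE, mul_zero]
  rw [this, mul_zero]

end State

/-- Bounded sequences. -/
def bddSeq : Submodule ℝ (ℕ → ℝ) where
  carrier := {f | Bdd f}
  add_mem' := fun hf hg => Bdd.add hf hg
  zero_mem' := Bdd.const 0
  smul_mem' := fun c _ hf => (Bdd.const c).mul hf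

theorem exists_lim (U : Ultrafilter ℕ) {f : ℕ → ℝ} (hf : Bdd f) : ∃ x, Tendsto f U (𝓝 x) := by
  obtain ⟨C, hC⟩ := hf
  have hK : IsCompact (Set.Icc (-C) C) := isCompact_Icc
  have := isCompact_iff_ultrafilter_le_nhds.1 hK (U.map f) (by
    rw [Filter.le_principal_iff]
    exact Filter.mem_map.2 (Filter.univ_mem' fun n => abs_le.1 (hC n)))
  obtain ⟨x, -, hx⟩ := this
  exact ⟨x, hx⟩

theorem exists_LIM (U : Ultrafilter ℕ) :
    ∃ L : (ℕ → ℝ) →ₗ[ℝ] ℝ, ∀ f, Bdd f → Tendsto f U (𝓝 (L f)) := by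
  choose l hl using fun f : bddSeq => exists_lim U f.2
  let l' : bddSeq →ₗ[ℝ] ℝ :=
    { toFun := l
      map_add' := fun f g => tendsto_nhds_unique (hl (f + g)) ((hl f).add (hl g))
      map_smul' := fun c f => tendsto_nhds_unique (hl (c • f)) ((hl f).const_mul c) }
  obtain ⟨L, hL⟩ := LinearMap.exists_extend l'
  refine ⟨L, fun f hf => ?_⟩
  have : L f = l ⟨f, hf⟩ := by
    exact LinearMap.congr_fun hL ⟨f, hf⟩
  rw [this]
  exact hl ⟨f, hf⟩

/-- The generalized limit along an ultrafilter, as a state on `ℕ`. -/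
noncomputable def LIM (U : Ultrafilter ℕ) : State ℕ where
  lin := (exists_LIM U).choose
  one' := tendsto_nhds_unique ((exists_LIM U).choose_spec _ (Bdd.const 1)) tendsto_const_nhds
  nonneg' := fun f hf h => ge_of_tendsto ((exists_LIM U).choose_spec f hf)
    (Filter.univ_mem' h)

theorem LIM_tendsto (U : Ultrafilter ℕ) {f : ℕ → ℝ} (hf : Bdd f) : Tendsto f U (𝓝 (LIM U f)) :=
  (exists_LIM U).choose_spec f hf

theorem LIM_ge (U : Ultrafilter ℕ) {f : ℕ → ℝ} (hf : Bdd f) {c : ℝ} (h : ∀ᶠ n in U, c ≤ f n) :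
    c ≤ LIM U f := ge_of_tendsto (LIM_tendsto U hf) h

theorem LIM_le (U : Ultrafilter ℕ) {f : ℕ → ℝ} (hf : Bdd f) {c : ℝ} (h : ∀ᶠ n in U, f n ≤ c) :
    LIM U f ≤ c := le_of_tendsto (LIM_tendsto U hf) h

theorem LIM_congr (U : Ultrafilter ℕ) {f g : ℕ → ℝ} (hf : Bdd f) (hg : Bdd g)
    (h : ∀ᶠ n in U, f n = g n) : LIM U f = LIM U g :=
  tendsto_nhds_unique_of_eventuallyEq (LIM_tendsto U hf) (LIM_tendsto U hg) h

theorem LIM_lt_event (U : Ultrafilter ℕ) {f : ℕ → ℝ} (hf : Bdd f) {c : ℝ} (h : LIM U f < c) :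
    ∀ᶠ n in U, f n < c := (LIM_tendsto U hf).eventually (gt_mem_nhds h)

theorem LIM_gt_event (U : Ultrafilter ℕ) {f : ℕ → ℝ} (hf : Bdd f) {c : ℝ} (h : c < LIM U f) :
    ∀ᶠ n in U, c < f n := (LIM_tendsto U hf).eventually (lt_mem_nhds h)

theorem LIM_map (U : Ultrafilter ℕ) (φ : ℕ → ℕ) {f : ℕ → ℝ} (hf : Bdd f) :
    LIM (U.map φ) f = LIM U (fun n => f (φ n)) := by
  have h1 := LIM_tendsto (U.map φ) hf
  have h2 := LIM_tendsto U (hf.comp φ)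
  exact tendsto_nhds_unique (tendsto_map'_iff.1 h1) h2

theorem State.Bdd_apply {S : Type} (E : ℕ → State S) {f : S → ℝ} (hf : Bdd f) :
    Bdd (fun n => E n f) := by
  obtain ⟨C, hC⟩ := hf
  exact ⟨C, fun n => (E n).abs_le hC⟩

/-- A fixed nonprincipal ultrafilter. -/
noncomputable def hyp : Ultrafilter ℕ := Filter.hyperfilter ℕ

theorem hyp_le : (hyp : Filter ℕ) ≤ atTop := by
  rw [← Nat.cofinite_eq_atTop]; exact Filter.hyperfilter_le_cofinite

/-- Compactness: the limit of a sequence of states. -/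
noncomputable def slim {S : Type} (E : ℕ → State S) : State S := (LIM hyp).bind E

theorem slim_ge {S : Type} (E : ℕ → State S) {f : S → ℝ} (hf : Bdd f) {c : ℝ}
    (h : ∀ᶠ n in atTop, c ≤ E n f) : c ≤ slim E f :=
  LIM_ge _ (State.Bdd_apply E hf) (hyp_le h)

theorem slim_le {S : Type} (E : ℕ → State S) {f : S → ℝ} (hf : Bdd f) {c : ℝ}
    (h : ∀ᶠ n in atTop, E n f ≤ c) : slim E f ≤ c :=
  LIM_le _ (State.Bdd_apply E hf) (hyp_le h)

/-- lower bounds with an error tending to zero -/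
theorem slim_ge' {S : Type} (E : ℕ → State S) {f : S → ℝ} (hf : Bdd f) {c : ℝ} {e : ℕ → ℝ}
    (he : Tendsto e atTop (𝓝 0)) (h : ∀ᶠ n in atTop, c - e n ≤ E n f) : c ≤ slim E f := by
  have h1 : Tendsto (fun n => c - e n) hyp (𝓝 (c - 0)) :=
    (tendsto_const_nhds.sub he).mono_left hyp_le
  rw [sub_zero] at h1
  exact le_of_tendsto_of_tendsto h1 (LIM_tendsto hyp (State.Bdd_apply E hf)) (hyp_le h)

theorem slim_le' {S : Type} (E : ℕ → State S) {f : S → ℝ} (hf : Bdd f) {c : ℝ} {e : ℕ → ℝ}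
    (he : Tendsto e atTop (𝓝 0)) (h : ∀ᶠ n in atTop, E n f ≤ c + e n) : slim E f ≤ c := by
  have h1 : Tendsto (fun n => c + e n) hyp (𝓝 (c + 0)) :=
    (tendsto_const_nhds.add he).mono_left hyp_le
  rw [add_zero] at h1
  exact le_of_tendsto_of_tendsto (LIM_tendsto hyp (State.Bdd_apply E hf)) h1 (hyp_le h)

theorem tendsto_inv_succ : Tendsto (fun n : ℕ => ((n : ℝ) + 1)⁻¹) atTop (𝓝 0) := by
  simpa [one_div] using (tendsto_one_div_add_atTop_nhds_zero_nat (𝕜 := ℝ))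

end DCS

namespace DCS

open Filter Topology

/-! ### Finite states and averages over words -/

/-- Finitely supported states: they commute with every state, and are monotone. -/
structure IsFin {T : Type} (P : State T) : Prop where
  swap : ∀ {S : Type} (E : State S) (f : T → S → ℝ),
    E (fun s => P (fun x => f x s)) = P (fun x => E (f x))
  mono : ∀ {f g : T → ℝ}, (∀ x, f x ≤ g x) → P f ≤ P g

theorem IsFin.pure {T : Type} (x : T) : IsFin (State.pure x) := ⟨fun _ _ => rfl, fun h => h x⟩

theorem IsFin.map {T R : Type} {P : State T} (hP : IsFin P) (φ : T → R) : IsFin (P.map φ) :=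
  ⟨fun E f => hP.swap E (fun x => f (φ x)), fun h => hP.mono (fun x => h _)⟩

theorem IsFin.bind {T R : Type} {P : State T} (hP : IsFin P) {Q : T → State R}
    (hQ : ∀ x, IsFin (Q x)) : IsFin (P.bind Q) := by
  refine ⟨fun E f => ?_, fun h => hP.mono (fun x => (hQ x).mono h)⟩
  simp only [State.bind_apply]
  rw [hP.swap E (fun x s => Q x (fun y => f y s))]
  exact P.congr (fun x => (hQ x).swap E f)

theorem IsFin.nonneg {T : Type} {P : State T} (hP : IsFin P) {f : T → ℝ} (h : ∀ x, 0 ≤ f x) :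
    0 ≤ P f := by
  have := hP.mono h
  rwa [P.const] at this

theorem IsFin.sq_le {T : Type} {P : State T} (hP : IsFin P) (f : T → ℝ) :
    (P f) ^ 2 ≤ P (fun s => (f s) ^ 2) := by
  have h := hP.nonneg (f := fun s => (f s - P f) ^ 2) (fun s => sq_nonneg _)
  have h2 : P (fun s => (f s - P f) ^ 2) = P (fun s => (f s)^2) - (P f)^2 := by
    have : (fun s => (f s - P f) ^ 2) = fun s => ((f s)^2 - (2 * P f) * f s) + (P f)^2 := by
      ext s; ring
    rw [this, P.add, P.sub, P.smul, P.const]; ring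
  rw [h2] at h
  linarith

section Av

variable {K : Type} [Fintype K] [Nonempty K]

theorem card_pos : (0 : ℝ) < Fintype.card K := by exact_mod_cast Fintype.card_pos

theorem one_le_card : (1 : ℝ) ≤ Fintype.card K := by exact_mod_cast Fintype.card_pos (α := K)

/-- The uniform state on a finite type. -/
noncomputable def unif (K : Type) [Fintype K] [Nonempty K] : State K where
  lin := ((Fintype.card K : ℝ))⁻¹ • ∑ b : K, LinearMap.proj b
  one' := by
    simp
  nonneg' := fun f _ h => by
    simp only [LinearMap.smul_apply, LinearMap.sum_apply, LinearMap.proj_apply, smul_eq_mul]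
    exact mul_nonneg (by positivity) (Finset.sum_nonneg fun b _ => h b)

theorem unif_apply (f : K → ℝ) : unif K f = ((Fintype.card K : ℝ))⁻¹ * ∑ b : K, f b := by
  change (((Fintype.card K : ℝ))⁻¹ • ∑ b : K, LinearMap.proj b : (K → ℝ) →ₗ[ℝ] ℝ) f = _
  simp only [LinearMap.smul_apply, LinearMap.sum_apply, LinearMap.proj_apply, smul_eq_mul]

theorem unif_fin : IsFin (unif K) := by
  refine ⟨fun E f => ?_, fun h => ?_⟩
  · simp only [unif_apply]
    rw [E.smul, E.sum]
  · simp only [unif_apply]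
    exact mul_le_mul_of_nonneg_left (Finset.sum_le_sum fun b _ => h b) (by positivity)

theorem le_unif {f : K → ℝ} (h : ∀ b, 0 ≤ f b) (b : K) : f b ≤ Fintype.card K * unif K f := by
  rw [unif_apply, mul_inv_cancel_left₀ card_pos.ne']
  exact Finset.single_le_sum (fun b _ => h b) (Finset.mem_univ b)

/-- The average over all words of length `n`. -/
noncomputable def av (K : Type) [Fintype K] [Nonempty K] : ℕ → State (List K)
  | 0 => State.pure []
  | n + 1 => (unif K).bind fun b => (av K n).map (b :: ·)

@[simp] theorem av_zero (f : List K → ℝ) : av K 0 f = f [] := rfl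

theorem av_succ (n : ℕ) (f : List K → ℝ) :
    av K (n + 1) f = unif K (fun b => av K n (fun x => f (b :: x))) := rfl

theorem av_fin (n : ℕ) : IsFin (av K n) := by
  induction n with
  | zero => exact IsFin.pure _
  | succ n ih => exact unif_fin.bind (fun b => ih.map _)

theorem av_add (m n : ℕ) (f : List K → ℝ) :
    av K (m + n) f = av K m (fun s => av K n (fun t => f (s ++ t))) := by
  induction m generalizing f with
  | zero => simp
  | succ m ih =>
    rw [Nat.succ_add]
    simp only [av_succ]
    refine (unif K).congr fun b => ?_
    rw [ih]; rfl

theorem av_mono {n : ℕ} {f g : List K → ℝ} (h : ∀ x, x.length = n → f x ≤ g x) :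
    av K n f ≤ av K n g := by
  induction n generalizing f g with
  | zero => exact h [] rfl
  | succ n ih =>
    simp only [av_succ]
    exact unif_fin.mono fun b => ih fun x hx => h _ (by simp [hx])

theorem av_congr {n : ℕ} {f g : List K → ℝ} (h : ∀ x, x.length = n → f x = g x) :
    av K n f = av K n g :=
  le_antisymm (av_mono fun x hx => (h x hx).le) (av_mono fun x hx => (h x hx).ge)

theorem av_nonneg {n : ℕ} {f : List K → ℝ} (h : ∀ x, 0 ≤ f x) : 0 ≤ av K n f :=
  (av_fin n).nonneg h

theorem av_bdd (n : ℕ) {S : Type} {f : List K → S → ℝ} {C : ℝ} (h : ∀ x s, |f x s| ≤ C) :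
    Bdd (fun s => av K n (fun x => f x s)) := ⟨C, fun s => (av K n).abs_le (fun x => h x s)⟩

theorem le_av {f : List K → ℝ} (h : ∀ x, 0 ≤ f x) (t : List K) :
    f t ≤ (Fintype.card K : ℝ) ^ t.length * av K t.length f := by
  induction t generalizing f with
  | nil => simp
  | cons b t ih =>
    have h1 := ih (f := fun x => f (b :: x)) (fun x => h _)
    have h2 := le_unif (K := K) (f := fun b => av K t.length (fun x => f (b :: x)))
      (fun b => av_nonneg fun x => h _) b
    simp only [List.length_cons, av_succ]
    calc f (b :: t) ≤ _ := h1
      _ ≤ (Fintype.card K : ℝ) ^ t.length * (Fintype.card K * unif K _) :=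
        mul_le_mul_of_nonneg_left h2 (by positivity)
      _ = _ := by ring

theorem av_append_le {f : List K → ℝ} (h : ∀ x, 0 ≤ f x) (n : ℕ) (r : List K) :
    av K n (fun x => f (x ++ r)) ≤
      (Fintype.card K : ℝ) ^ r.length * av K (n + r.length) f := by
  rw [av_add, ← (av K n).smul]
  exact (av_fin n).mono fun x => le_av (fun t => h _) r

theorem av_prepend_le {f : List K → ℝ} (h : ∀ x, 0 ≤ f x) (n : ℕ) (r : List K) :
    av K n (fun x => f (r ++ x)) ≤
      (Fintype.card K : ℝ) ^ r.length * av K (r.length + n) f := by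
  rw [av_add]
  exact le_av (f := fun r => av K n (fun x => f (r ++ x))) (fun t => av_nonneg fun x => h _) r

theorem av_drop (q n : ℕ) (f : List K → ℝ) :
    av K (q + n) (fun x => f (x.drop q)) = av K n f := by
  rw [av_add]
  rw [av_congr (g := fun _ => av K n f), State.const]
  intro x hx
  subst hx
  simp

theorem av_take (q n : ℕ) (f : List K → ℝ) :
    av K (q + n) (fun x => f (x.take q)) = av K q f := by
  rw [av_add]
  apply av_congr
  intro x hx
  subst hx
  simp [State.const]

/-- Consing to a sequence. -/
def scons {β : Type} (x : β) (u : ℕ → β) : ℕ → β := fun n => Nat.casesOn n x u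

/-- Shift of a sequence. -/
def shift {β : Type} (u : ℕ → β) : ℕ → β := fun n => u (n + 1)

@[simp] theorem scons_zero {β : Type} (x : β) (u : ℕ → β) : scons x u 0 = x := rfl
@[simp] theorem scons_succ {β : Type} (x : β) (u : ℕ → β) (n : ℕ) : scons x u (n + 1) = u n := rfl
@[simp] theorem shift_scons {β : Type} (x : β) (u : ℕ → β) : shift (scons x u) = u := rfl
@[simp] theorem shift_apply {β : Type} (u : ℕ → β) (n : ℕ) : shift u n = u (n + 1) := rfl
theorem scons_shift {β : Type} (u : ℕ → β) : scons (u 0) (shift u) = u := by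
  funext n; cases n <;> rfl

/-- Independent uniform blocks of lengths `n 0, …, n (m-1)`. -/
noncomputable def AvB (K : Type) [Fintype K] [Nonempty K] : (ℕ → ℕ) → ℕ → State (ℕ → List K)
  | _, 0 => State.pure (fun _ => [])
  | n, m + 1 => (av K (n 0)).bind fun x => (AvB K (shift n) m).map (scons x)

@[simp] theorem AvB_zero (n : ℕ → ℕ) (f : (ℕ → List K) → ℝ) : AvB K n 0 f = f (fun _ => []) := rfl

theorem AvB_succ (n : ℕ → ℕ) (m : ℕ) (f : (ℕ → List K) → ℝ) :
    AvB K n (m + 1) f = av K (n 0) (fun x => AvB K (shift n) m (fun ω => f (scons x ω))) := rfl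

theorem AvB_fin (n : ℕ → ℕ) (m : ℕ) : IsFin (AvB K n m) := by
  induction m generalizing n with
  | zero => exact IsFin.pure _
  | succ m ih => exact (av_fin _).bind (fun b => (ih _).map _)

theorem AvB_mono {n : ℕ → ℕ} {m : ℕ} {f g : (ℕ → List K) → ℝ}
    (h : ∀ ω, (∀ i < m, (ω i).length = n i) → f ω ≤ g ω) : AvB K n m f ≤ AvB K n m g := by
  induction m generalizing n f g with
  | zero => exact h _ (by simp)
  | succ m ih =>
    simp only [AvB_succ]
    refine av_mono fun x hx => ih fun ω hω => h _ fun i hi => ?_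
    cases i with
    | zero => exact hx
    | succ i => exact hω i (by omega)

theorem AvB_congr {n : ℕ → ℕ} {m : ℕ} {f g : (ℕ → List K) → ℝ}
    (h : ∀ ω, (∀ i < m, (ω i).length = n i) → f ω = g ω) : AvB K n m f = AvB K n m g :=
  le_antisymm (AvB_mono fun x hx => (h x hx).le) (AvB_mono fun x hx => (h x hx).ge)

end Av

/-! ### Carlson–Simpson trees -/

section Tree

variable {K L : Type}

/-- Substitution. -/
def sub (w : List (Option K)) (a : K) : List K := w.map (fun o => o.getD a)

@[simp] theorem sub_nil (a : K) : sub [] a = [] := rfl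
@[simp] theorem sub_cons (o : Option K) (w : List (Option K)) (a : K) :
    sub (o :: w) a = o.getD a :: sub w a := rfl
@[simp] theorem sub_append (w w' : List (Option K)) (a : K) :
    sub (w ++ w') a = sub w a ++ sub w' a := List.map_append
@[simp] theorem sub_length (w : List (Option K)) (a : K) : (sub w a).length = w.length :=
  List.length_map _
@[simp] theorem sub_map_some (w : List K) (a : K) : sub (w.map some) a = w := by
  simp [sub, Function.comp_def]

/-- A Carlson–Simpson tree: constant word and (tails of) left variable words. -/
structure Tr (K : Type) where
  c : List K
  u : ℕ → List (Option K)

/-- iterated shift -/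
def shn {β : Type} : ℕ → (ℕ → β) → (ℕ → β)
  | 0, u => u
  | m + 1, u => shn m (shift u)

/-- Concatenation of substituted words. -/
def app : (ℕ → List (Option K)) → List K → List K
  | _, [] => []
  | u, b :: t => b :: (sub (u 0) b ++ app (shift u) t)

/-- Same with variable words as arguments. -/
def vapp : (ℕ → List (Option K)) → List (Option K) → List (Option K)
  | _, [] => []
  | u, o :: t => o :: ((u 0).map (fun p => p.or o) ++ vapp (shift u) t)

@[simp] theorem app_nil (u : ℕ → List (Option K)) : app u [] = [] := rfl
@[simp] theorem app_cons (u : ℕ → List (Option K)) (b : K) (t : List K) :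
    app u (b :: t) = b :: (sub (u 0) b ++ app (shift u) t) := rfl

theorem app_append (u : ℕ → List (Option K)) (s t : List K) :
    app u (s ++ t) = app u s ++ app (shn s.length u) t := by
  induction s generalizing u with
  | nil => rfl
  | cons b s ih => simp [ih, shn]

theorem sub_vapp (u : ℕ → List (Option K)) (t : List (Option K)) (a : K) :
    sub (vapp u t) a = app u (sub t a) := by
  induction t generalizing u with
  | nil => rfl
  | cons o t ih =>
    simp only [vapp, sub_cons, sub_append, app_cons, ih]
    congr 2
    simp only [sub, List.map_map]
    apply List.map_congr_left
    intro p _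
    cases p <;> simp

/-- Composition on the variable word level. -/
def compU (u u' : ℕ → List (Option K)) : ℕ → List (Option K)
  | 0 => u 0 ++ vapp (shift u) (u' 0)
  | j + 1 => compU (shn (u' 0).length (shift u)) (shift u') j

theorem app_compU (u u' : ℕ → List (Option K)) (t : List K) :
    app (compU u u') t = app u (app u' t) := by
  induction t generalizing u u' with
  | nil => rfl
  | cons b t ih =>
    have h : shift (compU u u') = compU (shn (u' 0).length (shift u)) (shift u') := rfl
    simp only [app_cons, h, ih, app_append, sub_length]
    simp [compU, sub_vapp]

namespace Tr

/-- Evaluation of a tree. -/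
def ev (V : Tr K) (t : List K) : List K := V.c ++ app V.u t

@[simp] theorem ev_nil (V : Tr K) : V.ev [] = V.c := by simp [ev]

/-- Composition of trees. -/
def comp (V V' : Tr K) : Tr K := ⟨V.ev V'.c, compU (shn V'.c.length V.u) V'.u⟩

theorem comp_ev (V V' : Tr K) (t : List K) : (V.comp V').ev t = V.ev (V'.ev t) := by
  simp [comp, ev, app_compU, app_append]

/-- Change of letters. -/
def map (p : K → L) (V : Tr K) : Tr L := ⟨V.c.map p, fun j => (V.u j).map (Option.map p)⟩

theorem app_map (p : K → L) (u : ℕ → List (Option K)) (t : List K) :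
    (app u t).map p = app (fun j => (u j).map (Option.map p)) (t.map p) := by
  induction t generalizing u with
  | nil => rfl
  | cons b t ih =>
    simp only [app_cons, List.map_cons, List.map_append, ih]
    congr 2
    simp only [sub, List.map_map]
    apply List.map_congr_left
    intro o _
    cases o <;> simp

theorem map_ev (p : K → L) (V : Tr K) (t : List K) :
    (V.ev t).map p = (V.map p).ev (t.map p) := by
  simp [ev, map, app_map]

theorem map_map_some (V : Tr K) (a : K) :
    (V.map some).map (fun o : Option K => o.getD a) = V := by
  cases V with
  | mk c u =>
    simp only [map, Tr.mk.injEq, List.map_map]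
    refine ⟨by simp [Function.comp_def], ?_⟩
    funext j
    have : (Option.map (fun o : Option K => o.getD a)) ∘ Option.map some = id := by
      funext o; cases o <;> rfl
    rw [this, List.map_id]

/-- The shift tree. -/
def pre (s : List K) : Tr K := ⟨s, fun _ => []⟩

@[simp] theorem pre_ev (s t : List K) : (pre s).ev t = s ++ t := by
  have : ∀ t : List K, app (fun _ => []) t = t := by
    intro t
    induction t with
    | nil => rfl
    | cons b t ih => simp only [app_cons, sub_nil, List.nil_append]; congr 1
  simp [pre, ev, this]

/-- The weave tree. -/
def wv (ω : ℕ → List K) : Tr K := ⟨ω 0, fun j => (ω (j + 1)).map some⟩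

@[simp] theorem wv_nil (ω : ℕ → List K) : (wv ω).ev [] = ω 0 := by simp [wv]
@[simp] theorem wv_cons (ω : ℕ → List K) (b : K) (t : List K) :
    (wv ω).ev (b :: t) = ω 0 ++ b :: (wv (shift ω)).ev t := by
  simp [wv, ev, shift, sub_map_some]
  rfl

end Tr

/-- The event that the first `m` levels of the tree `V` lie in `X`. -/
def In (m : ℕ) (V : Tr K) (X : Set (List K)) : Prop := ∀ t : List K, t.length ≤ m → V.ev t ∈ X

theorem In.anti {m n : ℕ} (h : m ≤ n) {V : Tr K} {X : Set (List K)} (hX : In n V X) : In m V X :=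
  fun t ht => hX t (ht.trans h)

/-- Pullback of a set by a tree. -/
def pb (V : Tr K) (X : Set (List K)) : Set (List K) := {t | V.ev t ∈ X}

@[simp] theorem mem_pb {V : Tr K} {X : Set (List K)} {t : List K} : t ∈ pb V X ↔ V.ev t ∈ X :=
  Iff.rfl

theorem In_pb {m : ℕ} {V V' : Tr K} {X : Set (List K)} :
    In m V' (pb V X) ↔ In m (V.comp V') X := by
  simp [In, Tr.comp_ev]

theorem In_one {V : Tr K} {X : Set (List K)} :
    In 1 V X ↔ V.c ∈ X ∧ ∀ b, V.c ++ b :: sub (V.u 0) b ∈ X := by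
  constructor
  · intro h
    refine ⟨by simpa using h [] (by simp), fun b => by simpa [Tr.ev] using h [b] (by simp)⟩
  · rintro ⟨h1, h2⟩ t ht
    match t, ht with
    | [], _ => simpa using h1
    | [b], _ => simpa [Tr.ev] using h2 b

/-- No trees of height `m`. -/
def NT (m : ℕ) (E : State (Set (List K))) : Prop := ∀ V : Tr K, E (fun X => ind (In m V X)) = 0

theorem NT.map_pb {m : ℕ} {E : State (Set (List K))} (h : NT m E) (V : Tr K) :
    NT m (E.map (pb V)) := by
  intro V'
  simp only [State.map_apply, In_pb]
  exact h _

theorem NT.bind {m : ℕ} {T : Type} (P : State T) {E : T → State (Set (List K))}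
    (h : ∀ x, NT m (E x)) : NT m (P.bind E) := by
  intro V
  rw [State.bind_apply]
  simp only [fun x => h x V, State.const]

theorem NT.slim {m : ℕ} {E : ℕ → State (Set (List K))}
    (h : ∀ x, NT m (E x)) : NT m (slim E) := NT.bind _ h

end Tree

end DCS

namespace DCS

open Filter Topology

section FactS

variable {K : Type} [Fintype K] [Nonempty K]

/-- limiting density of `b` below `u` along `U` -/
noncomputable def dU (U : Ultrafilter ℕ) (b : List K → ℝ) (u : List K) : ℝ :=
  LIM U (fun n => av K (n - u.length) (fun t => b (u ++ t)))

theorem dU_bdd {b : List K → ℝ} {C : ℝ} (hb : ∀ t, |b t| ≤ C) (u : List K) :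
    Bdd (fun n => av K (n - u.length) (fun t => b (u ++ t))) :=
  ⟨C, fun n => (av K _).abs_le (fun t => hb _)⟩

theorem lemmaS (m : ℕ) : ∀ (ι : Type) [Finite ι] (b : ι → List K → ℝ) (C : ℝ)
    (_ : ∀ i t, |b i t| ≤ C) (U : Ultrafilter ℕ) (_ : (U : Filter ℕ) ≤ atTop)
    (D η ε : ℝ) (_ : 0 ≤ η) (_ : 0 < ε), (∀ i u, dU U (b i) u ≤ D) →
    (∀ i, D - η ≤ dU U (b i) []) →
    ∃ n : ℕ → ℕ, ∀ i (t : List K), t.length ≤ m →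
      D - (Fintype.card K : ℝ) ^ m * η - ε ≤ AvB K n (m + 1) (fun ω => b i ((Tr.wv ω).ev t)) := by
  induction m with
  | zero =>
    intro ι _ b C hb U hU D η ε hη hε hD h0
    have : ∀ᶠ n in U, ∀ i, D - η - ε < av K n (b i) := by
      rw [eventually_all]
      intro i
      have := LIM_gt_event U (dU_bdd (hb i) []) (c := D - η - ε) (by
        have := h0 i
        unfold dU at this
        linarith)
      simpa using this
    obtain ⟨n0, hn0⟩ := this.exists
    refine ⟨fun _ => n0, fun i t ht => ?_⟩
    have ht : t = [] := by simpa using ht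
    subst ht
    simp only [AvB_succ, Tr.wv_nil, AvB_zero, scons_zero, pow_zero, one_mul]
    exact (hn0 i).le
  | succ m ih =>
    intro ι _ b C hb U hU D η ε hη hε hD h0
    have : ∀ᶠ n in U, ∀ i, D - η - ε < av K n (b i) := by
      rw [eventually_all]
      intro i
      have := LIM_gt_event U (dU_bdd (hb i) []) (c := D - η - ε) (by
        have := h0 i
        unfold dU at this
        linarith)
      simpa using this
    obtain ⟨n0, hn0⟩ := this.exists
    have hsub : Tendsto (fun n : ℕ => n - (n0 + 1)) atTop atTop := tendsto_sub_atTop_nat _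
    let U' := U.map (fun n => n - (n0 + 1))
    have hU' : (U' : Filter ℕ) ≤ atTop := (Filter.map_mono hU).trans hsub
    let b' : ι × K → List K → ℝ := fun p u => av K n0 (fun x => b p.1 (x ++ p.2 :: u))
    have hb' : ∀ p t, |b' p t| ≤ C := fun p t => (av K n0).abs_le (fun x => hb _ _)
    -- densities of the new family
    have hd : ∀ p u, dU U' (b' p) u = av K n0 (fun x => dU U (b p.1) (x ++ p.2 :: u)) := by
      intro p u
      unfold dU
      rw [LIM_map U _ (dU_bdd (hb' p) u), ← (av_fin n0).swap]
      refine LIM_congr _ ((dU_bdd (hb' p) u).comp _) ⟨C, fun n => (av K n0).abs_le fun x => (av K _).abs_le fun t => hb _ _⟩ ?_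
      refine Eventually.of_forall fun n => ?_
      rw [(av_fin n0).swap]
      apply av_congr
      intro x hx
      have : n - (n0 + 1) - u.length = n - (x ++ p.2 :: u).length := by
        simp [hx]; omega
      simp only [this, List.append_assoc, List.cons_append]
    have hsum : ∀ i, dU U (b i) [] = unif K (fun c => dU U' (b' (i, c)) []) := by
      intro i
      simp only [hd]
      unfold dU
      simp only [← (av_fin n0).swap]
      rw [← unif_fin.swap]
      refine LIM_congr _ (dU_bdd (hb i) []) ⟨C, fun n => (unif K).abs_le fun c => (av K n0).abs_le fun x => (av K _).abs_le fun t => hb _ _⟩ ?_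
      filter_upwards [hU (eventually_ge_atTop (n0 + 1))] with n hn
      obtain ⟨r, rfl⟩ := Nat.exists_eq_add_of_le hn
      rw [← unif_fin.swap]
      simp only [List.length_nil, Nat.sub_zero, List.nil_append]
      rw [show n0 + 1 + r = n0 + (1 + r) by ring, av_add]
      apply av_congr
      intro x hx
      rw [add_comm 1 r, av_succ]
      refine (unif K).congr fun c => ?_
      have : n0 + (r + 1) - (x ++ [c]).length = r := by simp [hx]; omega
      simp only [this, List.append_assoc, List.cons_append, List.nil_append]
    obtain ⟨n', hn'⟩ := ih (ι × K) b' C hb' U' hU' D (Fintype.card K * η) ε (by positivity) hε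
      (fun p u => by
        rw [hd]
        calc av K n0 (fun x => dU U (b p.1) (x ++ p.2 :: u)) ≤ av K n0 (fun _ => D) :=
              (av_fin n0).mono fun x => hD _ _
          _ = D := State.const _ _)
      (fun ⟨i, c⟩ => by
        have h1 := le_unif (K := K) (f := fun c => D - dU U' (b' (i, c)) []) (fun c => by
          rw [sub_nonneg, hd]
          calc av K n0 (fun x => dU U (b i) (x ++ c :: [])) ≤ av K n0 (fun _ => D) :=
                (av_fin n0).mono fun x => hD _ _
            _ = D := State.const _ _) c
        rw [State.sub, State.const, ← hsum] at h1
        have h2 := h0 i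
        have h3 : (Fintype.card K : ℝ) * (D - dU U (b i) []) ≤ Fintype.card K * η :=
          mul_le_mul_of_nonneg_left (by linarith) (by positivity)
        linarith)
    refine ⟨scons n0 n', fun i t ht => ?_⟩
    have hK := one_le_card (K := K)
    cases t with
    | nil =>
      rw [AvB_succ]
      simp only [Tr.wv_nil, scons_zero, State.const]
      have h1 := hn0 i
      have h2 : η ≤ (Fintype.card K : ℝ) ^ (m+1) * η := le_mul_of_one_le_left hη (one_le_pow₀ hK)
      linarith
    | cons c t =>
      rw [AvB_succ]
      simp only [Tr.wv_cons, scons_zero, shift_scons]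
      have h1 := hn' (i, c) t (by simpa using ht)
      rw [← (av_fin n0).swap]
      refine le_trans (le_of_eq ?_) h1
      ring

/-- **Fact S** (symmetrization). -/
theorem factS {S : Type} (act : Tr K → S → S) (a : List K → S → ℝ) (C : ℝ)
    (ha : ∀ t s, |a t s| ≤ C) (hact : ∀ V t s, a t (act V s) = a (V.ev t) s)
    (E : State S) (δ : ℝ) (hE : ∃ᶠ n in atTop, δ ≤ av K n (fun t => E (a t))) :
    ∃ E' : State S, (∀ t, δ ≤ E' (a t)) ∧
      ∀ f : S → ℝ, (∀ V, E (fun s => f (act V s)) = 0) → E' f = 0 := by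
  obtain ⟨U, hU, hUδ⟩ : ∃ U : Ultrafilter ℕ, (U : Filter ℕ) ≤ atTop ∧
      ∀ᶠ n in U, δ ≤ av K n (fun t => E (a t)) := by
    obtain ⟨U, hU⟩ := Ultrafilter.exists_le (f := atTop ⊓ 𝓟 {n | δ ≤ av K n (fun t => E (a t))})
      (h := frequently_mem_iff_neBot.1 hE)
    exact ⟨U, hU.trans inf_le_left, le_principal_iff.1 (hU.trans inf_le_right)⟩
  set b : List K → ℝ := fun t => E (a t) with hbdef
  have hb : ∀ t, |b t| ≤ C := fun t => E.abs_le (ha t)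
  have hbd : BddAbove (Set.range (dU U b)) := by
    refine ⟨C, ?_⟩
    rintro _ ⟨u, rfl⟩
    exact (LIM U).le_of_le (dU_bdd hb u) fun n => (abs_le.1 ((av K _).abs_le (fun t => hb _))).2
  set D := ⨆ u, dU U b u with hDdef
  have hD : ∀ u, dU U b u ≤ D := fun u => le_ciSup hbd u
  have hδD : δ ≤ D := by
    refine le_trans ?_ (hD [])
    exact LIM_ge _ (dU_bdd hb []) (by simpa using hUδ)
  have key : ∀ m : ℕ, ∃ Em : State S,
      (∀ t : List K, t.length ≤ m → D - ((m : ℝ) + 1)⁻¹ - ((m : ℝ) + 1)⁻¹ ≤ Em (a t)) ∧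
      ∀ f : S → ℝ, (∀ V, E (fun s => f (act V s)) = 0) → Em f = 0 := by
    intro m
    have hKp : (0 : ℝ) < (Fintype.card K : ℝ) ^ m := pow_pos card_pos m
    set ε : ℝ := ((m : ℝ) + 1)⁻¹ with hε
    have hεp : 0 < ε := by positivity
    obtain ⟨s, hs⟩ : ∃ s, D - ε / (Fintype.card K : ℝ) ^ m < dU U b s :=
      exists_lt_of_lt_ciSup (by
        have : 0 < ε / (Fintype.card K : ℝ) ^ m := by positivity
        linarith)
    have hds : ∀ u, dU (U.map (fun n => n - s.length)) (fun t => b (s ++ t)) u =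
        dU U b (s ++ u) := by
      intro u
      unfold dU
      rw [LIM_map _ _ (dU_bdd (fun t => hb _) u)]
      refine State.congr _ fun n => ?_
      simp only [List.length_append, Nat.sub_sub, List.append_assoc]
    obtain ⟨n, hn⟩ := lemmaS m Unit (fun _ t => b (s ++ t)) C (fun _ t => hb _)
      (U.map (fun n => n - s.length))
      ((Filter.map_mono hU).trans (tendsto_sub_atTop_nat _)) D (ε / (Fintype.card K : ℝ) ^ m) ε
      (by positivity) hεp (fun _ u => by rw [hds]; exact hD _)
      (fun _ => by rw [hds, List.append_nil]; exact hs.le)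
    refine ⟨(AvB K n (m+1)).bind fun ω => E.map (act ((Tr.pre s).comp (Tr.wv ω))), ?_, ?_⟩
    · intro t ht
      have := hn () t ht
      simp only [State.bind_apply, State.map_apply, hact, Tr.comp_ev, Tr.pre_ev]
      rw [mul_div_cancel₀ _ hKp.ne'] at this
      exact this
    · intro f hf
      simp only [State.bind_apply, State.map_apply, hf, State.const]
  choose Em hEm hEm' using key
  refine ⟨slim Em, fun t => hδD.trans ?_, fun f hf => ?_⟩
  · refine slim_ge' (e := fun m => ((m : ℝ) + 1)⁻¹ + ((m : ℝ) + 1)⁻¹) _ ⟨C, ha t⟩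
      (by simpa using tendsto_inv_succ.add tendsto_inv_succ) ?_
    filter_upwards [eventually_ge_atTop t.length] with m hm
    have := hEm m t hm
    linarith
  · simp only [slim, State.bind_apply, hEm' _ f hf, State.const]

end FactS

end DCS

namespace DCS

open Filter Topology

/-- A Cauchy–Schwarz estimate for families of events. -/
theorem second_moment {S ι : Type} (Q : State S) (s : Finset ι) (p : ι → S → Prop) (δ η : ℝ)
    (hδ : 0 ≤ δ) (hη : 0 ≤ η) (h1 : ∀ i ∈ s, δ ≤ Q (fun x => ind (p i x)))
    (h2 : ∀ i ∈ s, ∀ j ∈ s, i ≠ j → Q (fun x => ind (p i x ∧ p j x)) ≤ η) :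
    ((s.card : ℝ) * δ) ^ 2 ≤ s.card + (s.card : ℝ) ^ 2 * η := by
  classical
  have hb : Bdd (fun x => ∑ i ∈ s, ind (p i x)) := Bdd.sum s fun i => Bdd.ind _
  have h3 : (s.card : ℝ) * δ ≤ Q (fun x => ∑ i ∈ s, ind (p i x)) := by
    rw [Q.sum, ← nsmul_eq_mul]
    exact Finset.card_nsmul_le_sum _ _ _ h1
  have h4 := Q.sq_le hb
  have h5 : Q (fun x => (∑ i ∈ s, ind (p i x)) ^ 2) =
      ∑ i ∈ s, ∑ j ∈ s, Q (fun x => ind (p i x ∧ p j x)) := by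
    simp only [ind_and, pow_two, Finset.sum_mul_sum]
    rw [Q.sum]
    exact Finset.sum_congr rfl fun i _ => Q.sum _ _
  have h6 : ∑ i ∈ s, ∑ j ∈ s, Q (fun x => ind (p i x ∧ p j x)) ≤
      ∑ i ∈ s, ∑ j ∈ s, ((if i = j then 1 else 0) + η) := by
    refine Finset.sum_le_sum fun i hi => Finset.sum_le_sum fun j hj => ?_
    by_cases hij : i = j
    · rw [if_pos hij]
      have := Q.le_of_le (Bdd.ind (fun x => p i x ∧ p j x)) (c := 1) (fun x => ind_le_one _)
      linarith
    · rw [if_neg hij, zero_add]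
      exact h2 i hi j hj hij
  have h7 : ∑ i ∈ s, ∑ j ∈ s, ((if i = j then (1:ℝ) else 0) + η) = s.card + (s.card : ℝ) ^ 2 * η := by
    simp [Finset.sum_add_distrib]
    ring
  have h8 : ((s.card : ℝ) * δ) ^ 2 ≤ (Q (fun x => ∑ i ∈ s, ind (p i x))) ^ 2 :=
    pow_le_pow_left₀ (by positivity) h3 2
  linarith

/-- The main inductive statement: there is no line-free state with positive pointwise density. -/
def Pk (K : Type) : Prop := ∀ (E : State (Set (List K))) (κ : ℝ), 0 < κ → NT 1 E →
  ¬ ∀ t : List K, κ ≤ E (fun X => ind (t ∈ X))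

theorem Pk_unit : Pk Unit := by
  intro E κ hκ hE h
  obtain ⟨r, hr⟩ := exists_nat_gt (1 / κ ^ 2)
  have h2 : ∀ i j : ℕ, i < j → E (fun X => ind (List.replicate i () ∈ X ∧ List.replicate j () ∈ X)) = 0 := by
    intro i j hij
    have := hE ⟨List.replicate i (), fun _ => List.replicate (j - i - 1) none⟩
    rw [← this]
    refine E.congr fun X => ind_congr ?_
    rw [In_one]
    have : ∀ b : Unit, List.replicate i () ++ b :: sub (List.replicate (j - i - 1) none) b = List.replicate j () := by
      intro b
      apply List.eq_replicate_iff.2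
      constructor
      · simp; omega
      · intros; rfl
    simp only [this]
    simp
  have := second_moment E (Finset.range r) (fun i X => List.replicate i () ∈ X) κ 0 hκ.le le_rfl
    (fun i _ => h _) (fun i _ j _ hij => by
      rcases lt_or_gt_of_ne hij with h | h
      · exact (h2 i j h).le
      · rw [← h2 j i h]
        exact (E.congr fun X => ind_congr and_comm).le)
  simp only [Finset.card_range, mul_zero, add_zero] at this
  rw [div_lt_iff₀ (by positivity)] at hr
  have hrp : (0:ℝ) < r := by
    by_contra hc
    have : (r:ℝ) = 0 := le_antisymm (not_lt.1 hc) (by positivity)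
    rw [this] at hr; linarith
  nlinarith

section

variable {K : Type} [Fintype K] [Nonempty K]

/-- frequently positive density -/
def FD (E : State (Set (List K))) (δ : ℝ) : Prop :=
  ∃ᶠ n in atTop, δ ≤ av K n (fun t => E (fun X => ind (t ∈ X)))

theorem FD_of_pt {E : State (Set (List K))} {δ : ℝ} (h : ∀ t : List K, δ ≤ E (fun X => ind (t ∈ X))) :
    FD E δ := by
  refine Eventually.frequently (Eventually.of_forall fun n => ?_)
  have := (av_fin (K := K) n).mono h
  rwa [State.const] at this

theorem ind_abs_le (p : Prop) : |ind p| ≤ 1 := by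
  rw [abs_of_nonneg (ind_nonneg _)]; exact ind_le_one _

theorem E_ind_nonneg {S : Type} (E : State S) (p : S → Prop) : 0 ≤ E (fun s => ind (p s)) :=
  E.nonneg (Bdd.ind _) fun _ => ind_nonneg _

theorem E_ind_le_one {S : Type} (E : State S) (p : S → Prop) : E (fun s => ind (p s)) ≤ 1 :=
  E.le_of_le (Bdd.ind _) fun _ => ind_le_one _

theorem E_ind_mono {S : Type} (E : State S) {p q : S → Prop} (h : ∀ s, p s → q s) :
    E (fun s => ind (p s)) ≤ E (fun s => ind (q s)) :=
  E.mono (Bdd.ind _) (Bdd.ind _) fun s => ind_mono (h s)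

theorem factS_set {E : State (Set (List K))} {δ : ℝ} {m : ℕ} (h : FD E δ) (hE : NT m E) :
    ∃ E' : State (Set (List K)), (∀ t, δ ≤ E' (fun X => ind (t ∈ X))) ∧ NT m E' := by
  obtain ⟨E', h1, h2⟩ := factS (K := K) (S := Set (List K)) pb (fun t X => ind (t ∈ X)) 1
    (fun t X => ind_abs_le _) (fun V t s => rfl) E δ h
  refine ⟨E', h1, fun V => h2 _ fun V' => ?_⟩
  simp only [In_pb]
  exact hE _

theorem T1 (hP : Pk K) (E : State (Set (List K))) (δ : ℝ) (hδ : 0 < δ) (h : FD E δ) :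
    ∃ V, 0 < E (fun X => ind (In 1 V X)) := by
  by_contra hc
  push Not at hc
  obtain ⟨E', h1, h2⟩ := factS_set (m := 1) h
    (fun V => le_antisymm (hc V) (E_ind_nonneg _ _))
  exact hP E' δ hδ h2 h1

theorem exists_ultra {p : ℕ → Prop} (h : ∃ᶠ n in atTop, p n) :
    ∃ U : Ultrafilter ℕ, (U : Filter ℕ) ≤ atTop ∧ ∀ᶠ n in U, p n := by
  obtain ⟨U, hU⟩ := Ultrafilter.exists_le (f := atTop ⊓ 𝓟 {n | p n})
    (h := frequently_mem_iff_neBot.1 h)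
  exact ⟨U, hU.trans inf_le_left, le_principal_iff.1 (hU.trans inf_le_right)⟩

theorem freq_of_ultra {p : ℕ → Prop} {U : Ultrafilter ℕ} (hU : (U : Filter ℕ) ≤ atTop)
    (h : ∀ᶠ n in U, p n) : ∃ᶠ n in atTop, p n :=
  h.frequently.filter_mono hU

/-- correlation of two levels -/
noncomputable def corr (E : State (Set (List K))) (l n : ℕ) : ℝ :=
  av K l (fun t => av K (n - l) (fun z => E (fun X => ind (t ∈ X ∧ t ++ z ∈ X))))

theorem corr_abs (E : State (Set (List K))) (l n : ℕ) : |corr E l n| ≤ 1 :=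
  (av K l).abs_le fun _ => (av K _).abs_le fun _ => E.abs_le fun _ => ind_abs_le _

theorem corr_bdd (E : State (Set (List K))) (l : ℕ) : Bdd (corr E l) := ⟨1, corr_abs E l⟩

theorem corr_lemma (E : State (Set (List K))) (δ : ℝ) (hδ : 0 < δ) (U : Ultrafilter ℕ)
    (hU : (U : Filter ℕ) ≤ atTop)
    (hd : ∀ᶠ n in U, δ ≤ av K n (fun t => E (fun X => ind (t ∈ X)))) :
    ∀ᶠ l in U, δ ^ 2 / 2 ≤ LIM U (corr E l) := by
  by_contra hc
  rw [← Ultrafilter.eventually_not] at hc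
  simp only [not_le] at hc
  have build : ∀ r : ℕ, ∃ s : Finset ℕ, s.card = r ∧
      (∀ l ∈ s, δ ≤ av K l (fun t => E (fun X => ind (t ∈ X))) ∧ LIM U (corr E l) < δ ^ 2 / 2) ∧
      ∀ l ∈ s, ∀ l' ∈ s, l < l' → corr E l l' < δ ^ 2 / 2 := by
    intro r
    induction r with
    | zero => exact ⟨∅, by simp⟩
    | succ r ih =>
      obtain ⟨s, hs, h1, h2⟩ := ih
      have h3 : ∀ᶠ n in U, ∀ l ∈ s, corr E l n < δ ^ 2 / 2 := by
        rw [Finset.eventually_all]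
        intro l hl
        exact LIM_lt_event U (corr_bdd E l) (h1 l hl).2
      have h4 : ∀ᶠ n in U, ∀ l ∈ s, l < n := by
        rw [Finset.eventually_all]
        intro l _
        exact hU (eventually_gt_atTop l)
      obtain ⟨n, ⟨h5, h6⟩, h7, h8⟩ := ((hd.and hc).and (h3.and h4)).exists
      have hn : n ∉ s := fun h => lt_irrefl _ (h8 n h)
      refine ⟨insert n s, by rw [Finset.card_insert_of_notMem hn, hs], ?_, ?_⟩
      · intro l hl
        rcases Finset.mem_insert.1 hl with rfl | hl
        · exact ⟨h5, h6⟩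
        · exact h1 l hl
      · intro l hl l' hl' hll
        rcases Finset.mem_insert.1 hl with rfl | hls <;> rcases Finset.mem_insert.1 hl' with rfl | hls'
        · exact absurd hll (lt_irrefl _)
        · exact absurd (h8 l' hls') (by omega)
        · exact h7 l hls
        · exact h2 l hls l' hls' hll
  obtain ⟨r, hr⟩ := exists_nat_gt (2 / δ ^ 2)
  obtain ⟨s, hs, h1, h2⟩ := build r
  obtain ⟨N, hN⟩ : ∃ N, ∀ l ∈ s, l ≤ N := ⟨s.sup id, fun l hl => Finset.le_sup (f := id) hl⟩
  let Q : State (List K × Set (List K)) := (av K N).bind fun x => E.map (Prod.mk x)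
  have hQ1 : ∀ l ∈ s, δ ≤ Q (fun x => ind (x.1.take l ∈ x.2)) := by
    intro l hl
    refine (h1 l hl).1.trans (le_of_eq ?_)
    obtain ⟨q, rfl⟩ := Nat.exists_eq_add_of_le (hN l hl)
    exact (av_take l q (fun t => E (fun X => ind (t ∈ X)))).symm
  have hQ2 : ∀ l ∈ s, ∀ l' ∈ s, l < l' →
      Q (fun x => ind (x.1.take l ∈ x.2 ∧ x.1.take l' ∈ x.2)) ≤ δ ^ 2 / 2 := by
    intro l hl l' hl' hll
    refine le_trans (le_of_eq ?_) (h2 l hl l' hl' hll).le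
    obtain ⟨q, rfl⟩ := Nat.exists_eq_add_of_le (hN l' hl')
    obtain ⟨p, rfl⟩ := Nat.exists_eq_add_of_le hll.le
    have := av_take (l + p) q (fun t => E (fun X => ind (t.take l ∈ X ∧ t ∈ X)))
    simp only [List.take_take, Nat.min_eq_left hll.le] at this
    refine this.trans ?_
    rw [av_add, corr]
    simp only [Nat.add_sub_cancel_left]
    apply av_congr
    intro t ht
    subst ht
    simp
  have := second_moment Q s (fun l x => x.1.take l ∈ x.2) δ (δ ^ 2 / 2) hδ.le (by positivity) hQ1
    (fun i hi j hj hij => by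
      rcases lt_or_gt_of_ne hij with h | h
      · exact hQ2 i hi j hj h
      · refine le_trans (le_of_eq ?_) (hQ2 j hj i hi h)
        exact Q.congr fun X => ind_congr and_comm)
  rw [hs] at this
  rw [div_lt_iff₀ (by positivity)] at hr
  have hrp : (0:ℝ) < r := by
    by_contra hc
    have : (r:ℝ) = 0 := le_antisymm (not_lt.1 hc) (by positivity)
    rw [this] at hr; linarith
  nlinarith

theorem PP (hP : Pk K) (E : State (Set (List K))) (δ : ℝ) (hδ : 0 < δ) (h : FD E δ) :
    ∃ (c : List K) (u : List (Option K)) (δ' : ℝ), 0 < δ' ∧ ∃ᶠ n in atTop,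
      δ' ≤ av K n (fun t => E (fun X => ind (c ∈ X ∧ ∀ b, c ++ b :: (sub u b ++ t) ∈ X))) := by
  obtain ⟨U, hU, hd⟩ := exists_ultra h
  have hcor := corr_lemma E δ hδ U hU hd
  let Y : List K → Set (List K) → Set (List K) := fun y X => {t | t ∈ X ∧ t ++ y.drop t.length ∈ X}
  let ν : ℕ → State (Set (List K)) := fun n => (av K n).bind fun y => E.map (Y y)
  let N : State (Set (List K)) := (LIM U).bind ν
  have hN : ∀ t : List K, N (fun X => ind (t ∈ X)) =
      LIM U (fun n => av K (n - t.length) (fun z => E (fun X => ind (t ∈ X ∧ t ++ z ∈ X)))) := by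
    intro t
    refine LIM_congr _ (State.Bdd_apply ν (Bdd.ind _))
      ⟨1, fun n => (av K _).abs_le fun x => E.abs_le fun _ => ind_abs_le _⟩ ?_
    filter_upwards [hU (eventually_ge_atTop t.length)] with n hn
    obtain ⟨q, rfl⟩ := Nat.exists_eq_add_of_le hn
    have := av_drop t.length q (fun z => E (fun X => ind (t ∈ X ∧ t ++ z ∈ X)))
    rw [Nat.add_sub_cancel_left]
    exact this
  have hFD : FD N (δ ^ 2 / 2) := by
    refine freq_of_ultra hU (hcor.mono fun l hl => hl.trans (le_of_eq ?_))
    simp only [hN]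
    rw [← (av_fin l).swap]
    refine State.congr _ fun n => ?_
    unfold corr
    apply av_congr
    intro t ht
    rw [ht]
  obtain ⟨V, hV⟩ := T1 hP N (δ ^ 2 / 2) (by positivity) hFD
  set γ := N (fun X => ind (In 1 V X)) with hγ
  refine ⟨V.c, V.u 0, γ / 2, by positivity, ?_⟩
  have h1 : ∀ᶠ n in U, γ / 2 < ν n (fun X => ind (In 1 V X)) :=
    LIM_gt_event U (State.Bdd_apply ν (Bdd.ind _)) (by
      change γ / 2 < γ
      linarith)
  set q := V.c.length + 1 + (V.u 0).length with hq
  have h2 : ∀ᶠ n in U, γ / 2 ≤ av K (n - q) (fun t => E (fun X => ind (V.c ∈ X ∧ ∀ b, V.c ++ b :: (sub (V.u 0) b ++ t) ∈ X))) := by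
    filter_upwards [hU (eventually_ge_atTop q), h1] with n hn hn1
    refine hn1.le.trans ?_
    obtain ⟨p, rfl⟩ := Nat.exists_eq_add_of_le hn
    rw [Nat.add_sub_cancel_left, ← av_drop q p]
    refine (av_fin _).mono fun y => E_ind_mono E fun X hX => ?_
    rw [In_one] at hX
    refine ⟨hX.1.1, fun b => ?_⟩
    have h3 := (hX.2 b).2
    have h4 : (V.c ++ b :: sub (V.u 0) b).length = q := by simp [hq]; omega
    rw [h4] at h3
    simpa using h3
  have : ∃ᶠ n in atTop, γ / 2 ≤ av K (n - q) (fun t => E (fun X => ind (V.c ∈ X ∧ ∀ b, V.c ++ b :: (sub (V.u 0) b ++ t) ∈ X))) :=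
    freq_of_ultra hU h2
  exact (tendsto_sub_atTop_nat q).frequently this

theorem Tm (hP : Pk K) (m : ℕ) : ∀ (E : State (Set (List K))) (δ : ℝ) (_ : 0 < δ) (_ : FD E δ),
    ∃ V, 0 < E (fun X => ind (In m V X)) := by
  induction m with
  | zero =>
    intro E δ hδ h
    obtain ⟨n, hn⟩ := h.exists
    by_contra hc
    push Not at hc
    have : ∀ t : List K, E (fun X => ind (t ∈ X)) ≤ 0 := by
      intro t
      refine le_trans (E_ind_mono E fun X hX => ?_) (hc (Tr.pre t))
      intro s hs
      have : s = [] := by simpa using hs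
      subst this
      rw [Tr.pre_ev, List.append_nil]; exact hX
    have h2 := (av_fin (K := K) n).mono this
    rw [State.const] at h2
    linarith
  | succ m ih =>
    intro E δ hδ h
    obtain ⟨c, u, δ', hδ', hf⟩ := PP hP E δ hδ h
    have hc : 0 < E (fun X => ind (c ∈ X)) := by
      obtain ⟨n, hn⟩ := hf.exists
      refine lt_of_lt_of_le hδ' (hn.trans ?_)
      have := (av_fin (K := K) n).mono (fun t =>
        E_ind_mono E (p := fun X => c ∈ X ∧ ∀ b, c ++ b :: (sub u b ++ t) ∈ X)
          (q := fun X => c ∈ X) (fun X hX => hX.1))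
      rwa [State.const] at this
    let Y : Set (List K) → Set (List K) := fun X => {t | ∀ b, c ++ b :: (sub u b ++ t) ∈ X}
    let E1 := (E.cond (fun X => ind (c ∈ X)) (Bdd.ind _) (fun _ => ind_nonneg _) hc)
    have key : ∀ p : Set (List K) → Prop, E (fun X => ind (c ∈ X)) * E1 (fun X => ind (p X)) =
        E (fun X => ind (c ∈ X ∧ p X)) := by
      intro p
      simp only [ind_and]
      exact State.cond_mul _ _ _ _ _ _
    obtain ⟨V, hV⟩ := ih (E1.map Y) δ' hδ' (by
      refine hf.mono fun n hn => hn.trans ((av_fin n).mono fun t => ?_)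
      rw [← key, State.map_apply]
      refine mul_le_of_le_one_left (E_ind_nonneg _ _) (E_ind_le_one _ _))
    refine ⟨⟨c, scons (u ++ V.c.map some) V.u⟩, ?_⟩
    rw [State.map_apply] at hV
    refine lt_of_lt_of_le (mul_pos hc hV) ?_
    rw [key]
    refine E_ind_mono E fun X hX t ht => ?_
    cases t with
    | nil => simpa using hX.1
    | cons b t =>
      have := hX.2 t (by simpa using ht) b
      simpa [Tr.ev] using this

theorem app_bound (m : ℕ) : ∀ u : ℕ → List (Option K), ∃ B : ℕ, ∀ t : List K, t.length ≤ m →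
    (app u t).length ≤ B := by
  induction m with
  | zero =>
    intro u
    refine ⟨0, fun t ht => ?_⟩
    have : t = [] := by simpa using ht
    subst this; simp
  | succ m ih =>
    intro u
    obtain ⟨B, hB⟩ := ih (shift u)
    refine ⟨1 + (u 0).length + B, fun t ht => ?_⟩
    cases t with
    | nil => simp
    | cons b t =>
      have := hB t (by simpa using ht)
      simp
      omega

theorem FT (hP : Pk K) (m : ℕ) (κ : ℝ) (hκ : 0 < κ) : ∃ (M : ℕ) (π : ℝ), 0 < π ∧
    ∀ E : State (Set (List K)), (∀ t : List K, t.length ≤ M → κ ≤ E (fun X => ind (t ∈ X))) →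
      ∃ V : Tr K, (∀ t : List K, t.length ≤ m → (V.ev t).length ≤ M) ∧
        π ≤ E (fun X => ind (In m V X)) := by
  by_contra hc
  push Not at hc
  choose E hE1 hE2 using fun M : ℕ => hc M ((M : ℝ) + 1)⁻¹ (by positivity)
  obtain ⟨V, hV⟩ := Tm hP m (slim E) κ hκ (FD_of_pt fun t => slim_ge _ (Bdd.ind _) (by
    filter_upwards [eventually_ge_atTop t.length] with M hM
    exact hE1 M t hM))
  obtain ⟨B, hB⟩ := app_bound m V.u
  refine absurd hV (not_lt.2 (slim_le' _ (Bdd.ind _) tendsto_inv_succ ?_))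
  filter_upwards [eventually_ge_atTop (V.c.length + B)] with M hM
  rw [zero_add]
  refine (hE2 M V fun t ht => ?_).le
  have := hB t ht
  simp [Tr.ev]; omega

/-- The infinite density theorem for `K`. -/
theorem inf_tree (hP : Pk K) (A : Set (List K)) (δ : ℝ) (hδ : 0 < δ)
    (h : ∃ᶠ n in atTop, δ ≤ av K n (fun t => ind (t ∈ A))) :
    ∃ V : Tr K, ∀ t, V.ev t ∈ A := by
  let LD : Set (List K) → Prop := fun A => ∃ δ > 0, ∃ᶠ n in atTop, δ ≤ av K n (fun t => ind (t ∈ A))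
  have step : ∀ A : {A // LD A}, ∃ (c : List K) (u : List (Option K)),
      c ∈ A.1 ∧ LD {t | ∀ b, c ++ b :: (sub u b ++ t) ∈ A.1} := by
    rintro ⟨A, δ, hδ, h⟩
    obtain ⟨c, u, δ', hδ', hf⟩ := PP hP (State.pure A) δ hδ h
    simp only [State.pure_apply] at hf
    refine ⟨c, u, ?_, δ', hδ', ?_⟩
    · by_contra hcA
      obtain ⟨n, hn⟩ := hf.exists
      simp only [ind_false (p := _ ∧ _) (fun h => hcA h.1)] at hn
      rw [State.const] at hn
      linarith
    · exact hf.mono fun n hn => hn.trans ((av_fin n).mono fun t => ind_mono fun h => h.2)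
  choose c u hc hu using step
  let st : {A // LD A} → {A // LD A} := fun A => ⟨_, hu A⟩
  let W : {A // LD A} → Tr K := fun A =>
    ⟨c A, fun j => u (st^[j] A) ++ (c (st^[j+1] A)).map some⟩
  have hW : ∀ (t : List K) (A : {A // LD A}), (W A).ev t ∈ A.1 := by
    intro t
    induction t with
    | nil => intro A; simpa using hc A
    | cons b t ih =>
      intro A
      have h1 := ih (st A) b
      have h2 : (W A).ev (b :: t) = c A ++ b :: (sub (u A) b ++ (W (st A)).ev t) := by
        have : shift (W A).u = (W (st A)).u := rfl
        simp only [Tr.ev, app_cons, this]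
        simp [W]
      rw [h2]
      exact h1
  exact ⟨W ⟨A, δ, hδ, h⟩, fun t => hW t ⟨A, δ, hδ, h⟩⟩

end

end DCS

namespace DCS

open Filter Topology

section KK

variable {K : Type} [Fintype K] [Nonempty K]

/-- Line free states with pointwise density at least `δ`. -/
def KK (δ : ℝ) (E : State (Set (List K))) : Prop :=
  NT 1 E ∧ ∀ t : List K, δ ≤ E (fun X => ind (t ∈ X))

theorem KK.map_pb {δ : ℝ} {E : State (Set (List K))} (h : KK δ E) (V : Tr K) :
    KK δ (E.map (pb V)) := ⟨h.1.map_pb V, fun t => h.2 (V.ev t)⟩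

theorem KK.bind {δ : ℝ} {T : Type} (P : State T) {E : T → State (Set (List K))}
    (h : ∀ x, KK δ (E x)) : KK δ (P.bind E) := by
  refine ⟨NT.bind P fun x => (h x).1, fun t => ?_⟩
  rw [State.bind_apply]
  exact P.ge_of_ge ⟨1, fun x => (E x).abs_le fun _ => ind_abs_le _⟩ fun x => (h x).2 t

theorem KK.slim {δ : ℝ} {E : ℕ → State (Set (List K))} (h : ∀ x, KK δ (E x)) : KK δ (slim E) :=
  KK.bind _ h

theorem exists_dstar (h : ¬ Pk K) : ∃ δs : ℝ, 0 < δs ∧ (∃ E : State (Set (List K)), KK δs E) ∧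
    ∀ (E : State (Set (List K))) (δ : ℝ), KK δ E → δ ≤ δs := by
  unfold Pk at h
  push Not at h
  obtain ⟨E0, κ, hκ, hE0, hE0'⟩ := h
  let D : Set ℝ := {δ | ∃ E : State (Set (List K)), KK δ E}
  have hbd : BddAbove D := ⟨1, fun δ ⟨E, hE⟩ => (hE.2 []).trans (E_ind_le_one _ _)⟩
  have hne : D.Nonempty := ⟨κ, E0, hE0, hE0'⟩
  refine ⟨sSup D, lt_of_lt_of_le hκ (le_csSup hbd ⟨E0, hE0, hE0'⟩), ?_,
    fun E δ hE => le_csSup hbd ⟨E, hE⟩⟩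
  have : ∀ m : ℕ, ∃ E : State (Set (List K)), KK (sSup D - ((m:ℝ) + 1)⁻¹) E := by
    intro m
    have hp : 0 < ((m:ℝ) + 1)⁻¹ := by positivity
    obtain ⟨δ, ⟨E, hE⟩, hδ⟩ := exists_lt_of_lt_csSup hne (show sSup D - ((m:ℝ) + 1)⁻¹ < sSup D by linarith)
    exact ⟨E, hE.1, fun t => hδ.le.trans (hE.2 t)⟩
  choose E hE using this
  exact ⟨slim E, NT.slim fun x => (hE x).1, fun t => slim_ge' _ (Bdd.ind _) tendsto_inv_succ
    (Eventually.of_forall fun m => (hE m).2 t)⟩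

theorem upper_dens {δs : ℝ} (hmax : ∀ (E : State (Set (List K))) (δ : ℝ), KK δ E → δ ≤ δs)
    (E : State (Set (List K))) (hE : NT 1 E) (ε : ℝ) (hε : 0 < ε) :
    ∀ᶠ n in atTop, av K n (fun t => E (fun X => ind (t ∈ X))) ≤ δs + ε := by
  by_contra hc
  rw [not_eventually] at hc
  obtain ⟨E', h1, h2⟩ := factS_set (E := E) (δ := δs + ε) (m := 1)
    (hc.mono fun n hn => (not_le.1 hn).le) hE
  have := hmax E' _ ⟨h2, h1⟩
  linarith

end KK

section Step2

variable {α : Type} [Fintype α] [Nonempty α]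

/-- The event that `[]` and the lines in directions `α` through `x` lie in `X`. -/
def Fev (x : List (Option α)) (X : Set (List (Option α))) : Prop :=
  [] ∈ X ∧ ∀ a : α, some a :: (sub x a).map some ∈ X

/-- density of such -/
noncomputable def beta (E : State (Set (List (Option α)))) (n : ℕ) : ℝ :=
  av (Option α) n (fun x => E (fun X => ind (Fev x X)))

theorem beta_eq (E : State (Set (List (Option α)))) (n : ℕ) :
    beta E n = E (fun X => av (Option α) n (fun x => ind (Fev x X))) :=
  ((av_fin n).swap E _).symm

theorem vapp_length {β : Type} (M : ℕ) : ∀ (u : ℕ → List (Option β)) (w : List (Option β)),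
    w.length ≤ M → (vapp u w).length ≤ ∑ i ∈ Finset.range M, ((u i).length + 1) := by
  induction M with
  | zero =>
    intro u w hw
    have : w = [] := by simpa using hw
    subst this; simp [vapp]
  | succ M ih =>
    intro u w hw
    cases w with
    | nil => simp [vapp]
    | cons o w =>
      have := ih (shift u) w (by simpa using hw)
      rw [Finset.sum_range_succ']
      simp only [shift_apply] at this
      simp [vapp]
      omega

theorem window {δs : ℝ} (hno : ∀ θ > 0, ∀ E : State (Set (List (Option α))), KK δs E →
      ∀ᶠ n in atTop, beta E n < θ) (θ : ℝ) (hθ : 0 < θ) (R : ℕ) :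
    ∃ N : ℕ, ∀ E : State (Set (List (Option α))), KK δs E →
      ∃ n ≤ N, ∀ r ≤ R, beta E (n + r) < θ := by
  by_contra hc
  push Not at hc
  choose E hE hE2 using hc
  have h1 := hno (θ / (R + 1)) (by positivity) (slim E) (KK.slim hE)
  obtain ⟨n, hn⟩ := eventually_atTop.1 h1
  let f : Set (List (Option α)) → ℝ := fun X =>
    ∑ r ∈ Finset.range (R + 1), av (Option α) (n + r) (fun x => ind (Fev x X))
  have hf : Bdd f := Bdd.sum _ fun r => av_bdd _ (C := 1) fun _ _ => ind_abs_le _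
  have hEf : ∀ E : State (Set (List (Option α))), E f = ∑ r ∈ Finset.range (R + 1), beta E (n + r) := by
    intro E
    simp only [beta_eq]
    exact E.sum _ _
  have h2 : θ ≤ slim E f := by
    refine slim_ge _ hf ?_
    filter_upwards [eventually_ge_atTop n] with N hN
    obtain ⟨r, hr, hr2⟩ := hE2 N n hN
    rw [hEf]
    refine hr2.trans ?_
    exact Finset.single_le_sum (f := fun r => beta (E N) (n + r))
      (fun r _ => av_nonneg fun x => E_ind_nonneg _ _) (Finset.mem_range.2 (by omega))
  rw [hEf] at h2
  have h3 : ∑ r ∈ Finset.range (R + 1), beta (slim E) (n + r) <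
      ∑ r ∈ Finset.range (R + 1), θ / (R + 1) :=
    Finset.sum_lt_sum_of_nonempty (by simp) fun r _ => hn _ (by omega)
  have h4 : ∑ r ∈ Finset.range (R + 1), θ / ((R:ℝ) + 1) = θ := by
    rw [Finset.sum_const, Finset.card_range, nsmul_eq_mul]
    push_cast
    field_simp
  linarith

/-- the line event -/
def lineEv (xs : ℕ → List (Option α)) (c : List α) (w : List (Option α))
    (X : Set (List (Option α))) : Prop :=
  (app xs c).map some ∈ X ∧ ∀ a, (app xs (c ++ a :: sub w a)).map some ∈ X

theorem lemmaB {δs : ℝ} (hno : ∀ θ > 0, ∀ E : State (Set (List (Option α))), KK δs E →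
      ∀ᶠ n in atTop, beta E n < θ) (M : ℕ) : ∀ τ : ℝ, 0 < τ →
    ∃ R : ℕ, ∀ E : State (Set (List (Option α))), KK δs E → ∃ n : ℕ → ℕ,
      (∑ i ∈ Finset.range M, (n i + 1) ≤ R) ∧
      ∀ (c : List α) (w : List (Option α)), c.length + 1 + w.length ≤ M →
        AvB (Option α) n M (fun xs => E (fun X => ind (lineEv xs c w X))) ≤ τ := by
  induction M with
  | zero =>
    intro τ hτ
    refine ⟨0, fun E hE => ⟨fun _ => 0, by simp, fun c w h => ?_⟩⟩
    omega
  | succ M ih =>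
    intro τ hτ
    have hα : (0:ℝ) < Fintype.card α := card_pos
    have hK : (1:ℝ) ≤ Fintype.card (Option α) := one_le_card
    obtain ⟨R, hR⟩ := ih (τ / Fintype.card α) (by positivity)
    obtain ⟨N, hN⟩ := window hno (τ / (Fintype.card (Option α) : ℝ) ^ R) (by positivity) R
    refine ⟨N + 1 + R, fun E hE => ?_⟩
    obtain ⟨n0, hn0, hwin⟩ := hN E hE
    let E1 : State (Set (List (Option α))) := (unif α).bind fun a => (av (Option α) n0).bind fun x =>
      E.map (pb (Tr.pre (some a :: (sub x a).map some)))
    have hE1 : KK δs E1 := KK.bind _ fun a => KK.bind _ fun x => hE.map_pb _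
    obtain ⟨n', hn', hB⟩ := hR E1 hE1
    refine ⟨scons n0 n', ?_, ?_⟩
    · rw [Finset.sum_range_succ']
      simp only [scons_succ, scons_zero]
      omega
    intro c w hcw
    rw [AvB_succ]
    simp only [scons_zero]
    change av (Option α) n0 (fun x => AvB (Option α) n' M (fun ω => _)) ≤ τ
    rw [← (av_fin n0).swap]
    cases c with
    | nil =>
      have h1 : ∀ ω : ℕ → List (Option α), (∀ i < M, (ω i).length = n' i) →
          av (Option α) n0 (fun x => E (fun X => ind (lineEv (scons x ω) [] w X))) ≤ τ := by
        intro ω hω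
        set r := vapp ω w with hr
        have hrl : r.length ≤ R := by
          refine (vapp_length M ω w (by simp at hcw; omega)).trans (le_trans (le_of_eq ?_) hn')
          exact Finset.sum_congr rfl fun i hi => by rw [hω i (Finset.mem_range.1 hi)]
        have h2 : ∀ x, E (fun X => ind (lineEv (scons x ω) [] w X)) = E (fun X => ind (Fev (x ++ r) X)) := by
          intro x
          refine E.congr fun X => ind_congr ?_
          simp [lineEv, Fev, hr, sub_vapp]
        simp only [h2]
        refine (av_append_le (f := fun x => E (fun X => ind (Fev x X)))
          (fun x => E_ind_nonneg _ _) n0 r).trans ?_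
        have h3 := hwin r.length hrl
        have h4 : (Fintype.card (Option α) : ℝ) ^ r.length ≤ (Fintype.card (Option α) : ℝ) ^ R :=
          pow_le_pow_right₀ hK hrl
        have h5 : (0:ℝ) ≤ beta E (n0 + r.length) := av_nonneg fun x => E_ind_nonneg _ _
        calc (Fintype.card (Option α) : ℝ) ^ r.length * beta E (n0 + r.length)
            ≤ (Fintype.card (Option α) : ℝ) ^ R * (τ / (Fintype.card (Option α) : ℝ) ^ R) :=
              mul_le_mul h4 h3.le h5 (by positivity)
          _ = τ := by field_simp
      refine (AvB_mono h1).trans ?_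
      rw [State.const]
    | cons a0 c =>
      have h1 : ∀ ω : ℕ → List (Option α),
          av (Option α) n0 (fun x => E (fun X => ind (lineEv (scons x ω) (a0 :: c) w X))) ≤
          Fintype.card α * E1 (fun X => ind (lineEv ω c w X)) := by
        intro ω
        have h2 := le_unif (K := α) (f := fun a => av (Option α) n0 (fun x =>
          E (fun X => ind (lineEv ω c w (pb (Tr.pre (some a :: (sub x a).map some)) X)))))
          (fun a => av_nonneg fun x => E_ind_nonneg _ _) a0
        refine le_trans (le_of_eq ?_) h2
        refine State.congr _ fun x => E.congr fun X => ind_congr ?_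
        simp [lineEv]
      refine ((AvB_fin n' M).mono h1).trans ?_
      rw [State.smul]
      have := hB c w (by simp at hcw; omega)
      calc (Fintype.card α : ℝ) * _ ≤ Fintype.card α * (τ / Fintype.card α) :=
            mul_le_mul_of_nonneg_left this hα.le
        _ = τ := by field_simp

theorem step2 (hP : Pk α) {δs : ℝ} (hδ : 0 < δs)
    (hex : ∃ E : State (Set (List (Option α))), KK δs E) :
    ∃ θ > 0, ∃ E : State (Set (List (Option α))), KK δs E ∧ ∃ᶠ n in atTop, θ ≤ beta E n := by
  by_contra hc
  push Not at hc
  have hno : ∀ θ > 0, ∀ E : State (Set (List (Option α))), KK δs E →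
      ∀ᶠ n in atTop, beta E n < θ := by
    intro θ hθ E hE
    have := hc θ hθ E hE
    first
      | exact this
      | simpa using this
  obtain ⟨M, π, hπ, hFT⟩ := FT hP 1 δs hδ
  obtain ⟨R, hR⟩ := lemmaB hno M (π / 2) (by positivity)
  obtain ⟨E, hE⟩ := hex
  obtain ⟨n, -, hn⟩ := hR E hE
  obtain ⟨V, hV1, hV2⟩ := hFT ((AvB (Option α) n M).bind fun xs =>
    E.map fun X => {t | (app xs t).map some ∈ X}) (fun t _ => by
      simp only [State.bind_apply, State.map_apply, Set.mem_setOf_eq]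
      have := (AvB_fin n M).mono (fun xs => hE.2 ((app xs t).map some))
      rwa [State.const] at this)
  have h1 := hn V.c (V.u 0) (by
    have := hV1 [Classical.arbitrary α] (by simp)
    simp [Tr.ev] at this
    omega)
  simp only [State.bind_apply, State.map_apply, In_one] at hV2
  have := hV2.trans h1
  linarith

end Step2

end DCS

namespace DCS

open Filter Topology

section Resample

set_option linter.unusedSectionVars false

variable {α : Type} [Fintype α] [Nonempty α]

/-- Resampling of a letter. -/
noncomputable def rl (a b : α) : State (Option α) := by
  classical exact if b = a then (unif Bool).map (fun t => if t then some a else none)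
    else State.pure (some b)

theorem rl_self (a : α) (f : Option α → ℝ) : rl a a f = (f (some a) + f none) / 2 := by
  simp [rl, unif_apply]
  ring

theorem rl_ne {a b : α} (h : b ≠ a) (f : Option α → ℝ) : rl a b f = f (some b) := by
  simp [rl, h]

theorem rl_fin (a b : α) : IsFin (rl a b) := by
  classical
  unfold rl
  split_ifs
  · exact unif_fin.map _
  · exact IsFin.pure _

theorem rl_congr {a b : α} {f g : Option α → ℝ} (h : ∀ o : Option α, o.getD a = b → f o = g o) :
    rl a b f = rl a b g := by
  by_cases hb : b = a
  · subst hb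
    rw [rl_self, rl_self, h (some b) rfl, h none rfl]
  · rw [rl_ne hb, rl_ne hb, h (some b) rfl]

theorem unif_rl (a : α) (f : Option α → ℝ) :
    unif (Option α) (fun o => rl a (o.getD a) f) = unif (Option α) f := by
  classical
  rw [unif_apply, unif_apply, Fintype.sum_option, Fintype.sum_option]
  congr 1
  simp only [Option.getD_none, Option.getD_some]
  have h1 : ∀ b ∈ Finset.univ.erase a, rl a b f = f (some b) := fun b hb =>
    rl_ne (Finset.ne_of_mem_erase hb) f
  rw [← Finset.add_sum_erase _ _ (Finset.mem_univ a),
    ← Finset.add_sum_erase _ (fun b => f (some b)) (Finset.mem_univ a), Finset.sum_congr rfl h1, rl_self]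
  ring

/-- Resampling of a word. -/
noncomputable def rs (a : α) : List α → State (List (Option α))
  | [] => State.pure []
  | b :: u => (rl a b).bind fun c => (rs a u).map (c :: ·)

@[simp] theorem rs_nil (a : α) (f : List (Option α) → ℝ) : rs a [] f = f [] := rfl
theorem rs_cons (a b : α) (u : List α) (f : List (Option α) → ℝ) :
    rs a (b :: u) f = rl a b (fun c => rs a u (fun y => f (c :: y))) := rfl

theorem rs_fin (a : α) (u : List α) : IsFin (rs a u) := by
  induction u with
  | nil => exact IsFin.pure _
  | cons b u ih => exact (rl_fin a b).bind fun c => ih.map _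

theorem rs_congr {a : α} {u : List α} {f g : List (Option α) → ℝ}
    (h : ∀ y, sub y a = u → f y = g y) : rs a u f = rs a u g := by
  induction u generalizing f g with
  | nil => exact h [] rfl
  | cons b u ih =>
    rw [rs_cons, rs_cons]
    exact rl_congr fun o ho => ih fun y hy => h _ (by rw [sub_cons, ho, hy])

theorem rs_append (a : α) (u v : List α) (f : List (Option α) → ℝ) :
    rs a (u ++ v) f = rs a u (fun x => rs a v (fun y => f (x ++ y))) := by
  induction u generalizing f with
  | nil => rfl
  | cons b u ih =>
    rw [List.cons_append, rs_cons, rs_cons]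
    refine State.congr _ fun c => ?_
    rw [ih]; rfl

theorem av_rs (a : α) (n : ℕ) (f : List (Option α) → ℝ) :
    av (Option α) n (fun x => rs a (sub x a) f) = av (Option α) n f := by
  induction n generalizing f with
  | zero => rfl
  | succ n ih =>
    rw [av_succ, av_succ]
    simp only [sub_cons, rs_cons]
    have : ∀ b : Option α, av (Option α) n (fun x => rl a (b.getD a) fun c => rs a (sub x a) fun y => f (c :: y)) =
        rl a (b.getD a) (fun c => av (Option α) n (fun y => f (c :: y))) := by
      intro b
      rw [(rl_fin a _).swap]
      exact State.congr _ fun c => ih _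
    simp only [this]
    rw [unif_rl a (fun c => av (Option α) n (fun y => f (c :: y)))]

/-- Resampling of blocks. -/
noncomputable def RSB (a : α) : (ℕ → List α) → ℕ → State (ℕ → List (Option α))
  | _, 0 => State.pure (fun _ => [])
  | u, m + 1 => (rs a (u 0)).bind fun x => (RSB a (shift u) m).map (scons x)

@[simp] theorem RSB_zero (a : α) (u : ℕ → List α) (f : (ℕ → List (Option α)) → ℝ) :
    RSB a u 0 f = f (fun _ => []) := rfl
theorem RSB_succ (a : α) (u : ℕ → List α) (m : ℕ) (f : (ℕ → List (Option α)) → ℝ) :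
    RSB a u (m + 1) f = rs a (u 0) (fun x => RSB a (shift u) m (fun ω => f (scons x ω))) := rfl

theorem RSB_fin (a : α) (u : ℕ → List α) (m : ℕ) : IsFin (RSB a u m) := by
  induction m generalizing u with
  | zero => exact IsFin.pure _
  | succ m ih => exact (rs_fin a _).bind fun c => (ih _).map _

theorem RSB_congr {a : α} {u : ℕ → List α} {m : ℕ} {f g : (ℕ → List (Option α)) → ℝ}
    (h : ∀ ω, (∀ i < m, sub (ω i) a = u i) → f ω = g ω) : RSB a u m f = RSB a u m g := by
  induction m generalizing u f g with
  | zero => exact h _ (by simp)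
  | succ m ih =>
    rw [RSB_succ, RSB_succ]
    refine rs_congr fun x hx => ih fun ω hω => h _ fun i hi => ?_
    cases i with
    | zero => exact hx
    | succ i => exact hω i (by omega)

theorem RSB_ext {a : α} {u u' : ℕ → List α} {m : ℕ} (h : ∀ i < m, u i = u' i) :
    RSB a u m = RSB a u' m := by
  induction m generalizing u u' with
  | zero => rfl
  | succ m ih =>
    have := ih (u := shift u) (u' := shift u') (fun i hi => h (i + 1) (by omega))
    simp only [RSB, this, h 0 (by omega)]

/-- blockwise projection -/
def bl (a : α) (ω : ℕ → List (Option α)) : ℕ → List α := fun i => sub (ω i) a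

theorem AvB_RSB (a : α) (n : ℕ → ℕ) (m : ℕ) (f : (ℕ → List (Option α)) → ℝ) :
    AvB (Option α) n m (fun ω => RSB a (bl a ω) m f) = AvB (Option α) n m f := by
  induction m generalizing n f with
  | zero => rfl
  | succ m ih =>
    rw [AvB_succ, AvB_succ]
    have : ∀ x : List (Option α), AvB (Option α) (shift n) m (fun ω => RSB a (bl a (scons x ω)) (m+1) f) =
        rs a (sub x a) (fun z => AvB (Option α) (shift n) m (fun ω => f (scons z ω))) := by
      intro x
      have h1 : ∀ ω : ℕ → List (Option α), RSB a (bl a (scons x ω)) (m+1) f =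
          rs a (sub x a) (fun z => RSB a (bl a ω) m (fun ω => f (scons z ω))) := fun ω => rfl
      simp only [h1]
      rw [(rs_fin a _).swap]
      exact State.congr _ fun z => ih _ _
    simp only [this]
    rw [av_rs a (n 0) (fun z => AvB (Option α) (shift n) m (fun ω => f (scons z ω)))]

/-- resampled value of `G` on the weave -/
noncomputable def RSG (a : α) (m : ℕ) (u : ℕ → List α) (G : List (Option α) → ℝ)
    (t : List (Option α)) : ℝ := RSB a u m (fun ω => G ((Tr.wv ω).ev t))

/-- energy -/
noncomputable def Enp (a : α) (G : List (Option α) → ℝ) (p h : ℕ) : ℝ :=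
  av (Option α) p (fun x => av (Option α) h (fun y => (rs a (sub y a) (fun z => G (x ++ z))) ^ 2))

/-- start position of the block `j` -/
def pp (n : ℕ → ℕ) (j : ℕ) : ℕ := ∑ i ∈ Finset.range j, (n i + 1)

theorem pp_zero (n : ℕ → ℕ) : pp n 0 = 0 := rfl
theorem pp_succ (n : ℕ → ℕ) (j : ℕ) : pp n (j + 1) = n 0 + 1 + pp (shift n) j := by
  simp only [pp, Finset.sum_range_succ', shift_apply]; ring

theorem Enp_mono (a : α) (G : List (Option α) → ℝ) (p r h : ℕ) :
    Enp a G p (r + h) ≤ Enp a G (p + r) h := by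
  unfold Enp
  rw [av_add p r]
  refine (av_fin p).mono fun x => ?_
  rw [av_add r h]
  rw [← av_rs a r (fun t => av (Option α) h fun y => (rs a (sub y a) fun z => G (x ++ t ++ z)) ^ 2)]
  refine (av_fin r).mono fun y1 => ?_
  rw [← (rs_fin a _).swap]
  refine (av_fin h).mono fun y2 => ?_
  rw [sub_append, rs_append]
  simp only [List.append_assoc]
  exact (rs_fin a _).sq_le _

theorem C1 (a : α) (j : ℕ) : ∀ (M : ℕ) (n : ℕ → ℕ) (G : List (Option α) → ℝ), j ≤ M →
    av (Option α) j (fun t => AvB (Option α) n (M + 1) (fun ω => (RSG a (M + 1) (bl a ω) G t) ^ 2)) ≤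
      Enp a G (pp n j) (n j) := by
  induction j with
  | zero =>
    intro M n G _
    rw [av_zero, AvB_succ, pp_zero]
    unfold Enp
    rw [av_zero]
    refine le_of_eq (State.congr _ fun x => ?_)
    have : ∀ ω : ℕ → List (Option α), RSG a (M + 1) (bl a (scons x ω)) G [] = rs a (sub x a) G := by
      intro ω
      unfold RSG
      rw [RSB_succ]
      simp only [Tr.wv_nil, scons_zero, State.const]
      rfl
    simp only [this, State.const]
    rfl
  | succ j ih =>
    intro M n G hj
    obtain ⟨M, rfl⟩ : ∃ M', M = M' + 1 := ⟨M - 1, by omega⟩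
    rw [pp_succ]
    unfold Enp
    rw [show n 0 + 1 + pp (shift n) j = n 0 + (pp (shift n) j + 1) by ring, av_add (n 0)]
    -- rewrite left side
    have h1 : ∀ t : List (Option α), AvB (Option α) n (M + 1 + 1) (fun ω => (RSG a (M + 1 + 1) (bl a ω) G t) ^ 2)
        = av (Option α) (n 0) (fun x => AvB (Option α) (shift n) (M + 1) (fun ω =>
          (RSG a (M + 1 + 1) (bl a (scons x ω)) G t) ^ 2)) := fun t => rfl
    have h2 : ∀ (x : List (Option α)) (ω : ℕ → List (Option α)) (c : Option α) (t : List (Option α)),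
        RSG a (M + 1 + 1) (bl a (scons x ω)) G (c :: t) =
        rs a (sub x a) (fun z => RSG a (M + 1) (bl a ω) (fun y => G (z ++ c :: y)) t) := by
      intro x ω c t
      unfold RSG
      rw [RSB_succ]
      simp only [Tr.wv_cons, scons_zero, shift_scons]
      rfl
    have h3 : ∀ (c : Option α) (t : List (Option α)),
        AvB (Option α) n (M + 1 + 1) (fun ω => (RSG a (M + 1 + 1) (bl a ω) G (c :: t)) ^ 2) ≤
        av (Option α) (n 0) (fun z => AvB (Option α) (shift n) (M + 1) (fun ω =>
          (RSG a (M + 1) (bl a ω) (fun y => G (z ++ c :: y)) t) ^ 2)) := by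
      intro c t
      rw [h1, ← av_rs a (n 0) (fun z => AvB (Option α) (shift n) (M + 1) (fun ω =>
          (RSG a (M + 1) (bl a ω) (fun y => G (z ++ c :: y)) t) ^ 2))]
      refine (av_fin _).mono fun x => ?_
      rw [← (rs_fin a _).swap]
      refine (AvB_fin _ _).mono fun ω => ?_
      rw [h2]
      exact (rs_fin a _).sq_le _
    rw [av_succ]
    calc _ ≤ unif (Option α) (fun c => av (Option α) j (fun t => av (Option α) (n 0) (fun z => AvB (Option α) (shift n) (M + 1) (fun ω =>
          (RSG a (M + 1) (bl a ω) (fun y => G (z ++ c :: y)) t) ^ 2)))) :=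
          unif_fin.mono fun c => (av_fin j).mono fun t => h3 c t
      _ = av (Option α) (n 0) (fun z => unif (Option α) (fun c => av (Option α) j (fun t => AvB (Option α) (shift n) (M + 1) (fun ω =>
          (RSG a (M + 1) (bl a ω) (fun y => G (z ++ c :: y)) t) ^ 2)))) := by
          rw [unif_fin.swap]
          refine State.congr _ fun c => ?_
          rw [(av_fin j).swap]
      _ ≤ _ := by
          refine (av_fin _).mono fun z => ?_
          rw [av_succ]
          refine unif_fin.mono fun c => ?_
          refine (ih M (shift n) (fun y => G (z ++ c :: y)) (by omega)).trans (le_of_eq ?_)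
          unfold Enp
          simp only [List.append_assoc, List.cons_append, shift_apply]

theorem rs_RSG (a : α) (t : List α) : ∀ (M : ℕ) (u : ℕ → List α) (G : List (Option α) → ℝ),
    t.length ≤ M → rs a t (fun t' => RSG a (M + 1) u G t') = rs a ((Tr.wv u).ev t) G := by
  induction t with
  | nil =>
    intro M u G _
    rw [rs_nil, Tr.wv_nil]
    unfold RSG
    rw [RSB_succ]
    simp only [Tr.wv_nil, scons_zero, State.const]
  | cons b t ih =>
    intro M u G ht
    obtain ⟨M, rfl⟩ : ∃ M', M = M' + 1 := ⟨M - 1, by simp at ht; omega⟩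
    have h2 : ∀ (c : Option α) (t : List (Option α)),
        RSG a (M + 1 + 1) u G (c :: t) =
        rs a (u 0) (fun z => RSG a (M + 1) (shift u) (fun y => G (z ++ c :: y)) t) := by
      intro c t
      unfold RSG
      rw [RSB_succ]
      simp only [Tr.wv_cons, scons_zero, shift_scons]
    rw [rs_cons, Tr.wv_cons, rs_append]
    simp only [h2, rs_cons]
    simp only [(rs_fin a (u 0)).swap]
    refine State.congr _ fun z => State.congr _ fun c => ?_
    exact ih M (shift u) (fun y => G (z ++ c :: y)) (by simpa using ht)

theorem C2 {K : Type} [Fintype K] [Nonempty K] (j : ℕ) :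
    ∀ (M : ℕ) (n : ℕ → ℕ) (H : List K → ℝ), j ≤ M →
    av K j (fun t => AvB K n (M + 1) (fun ω => H ((Tr.wv ω).ev t))) = av K (pp n j + n j) H := by
  induction j with
  | zero =>
    intro M n H _
    simp only [av_zero, AvB_succ, Tr.wv_nil, scons_zero, State.const, pp_zero, zero_add]
  | succ j ih =>
    intro M n H hj
    obtain ⟨M, rfl⟩ : ∃ M', M = M' + 1 := ⟨M - 1, by omega⟩
    rw [pp_succ, show n 0 + 1 + pp (shift n) j + n (j+1) = n 0 + (pp (shift n) j + shift n j + 1) by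
      simp only [shift_apply]; ring, av_add (n 0), av_succ j]
    simp only [AvB_succ n (M + 1), Tr.wv_cons, scons_zero, shift_scons]
    simp only [(av_fin (n 0)).swap]
    refine State.congr _ fun z => ?_
    rw [av_succ]
    refine State.congr _ fun c => ?_
    exact ih M (shift n) (fun y => H (z ++ c :: y)) (by omega)

theorem wv_bl (a : α) (ω : ℕ → List (Option α)) (t : List (Option α)) :
    sub ((Tr.wv ω).ev t) a = (Tr.wv (bl a ω)).ev (sub t a) := by
  induction t generalizing ω with
  | nil =>
    rw [Tr.wv_nil, sub_nil, Tr.wv_nil]; rfl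
  | cons c t ih =>
    rw [Tr.wv_cons, sub_cons, Tr.wv_cons, sub_append, sub_cons, ih]
    rfl

/-- conditional variance identity -/
theorem rs_var (a : α) (j : ℕ) (H : List (Option α) → ℝ) :
    av (Option α) j (fun t => (H t - rs a (sub t a) H) ^ 2) =
      av (Option α) j (fun t => (H t) ^ 2) - av (Option α) j (fun t => (rs a (sub t a) H) ^ 2) := by
  have h1 : av (Option α) j (fun t => H t * rs a (sub t a) H) =
      av (Option α) j (fun t => (rs a (sub t a) H) ^ 2) := by
    rw [← av_rs a j]
    refine State.congr _ fun t => ?_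
    rw [rs_congr (g := fun y => H y * rs a (sub t a) H) (fun y hy => by rw [hy]), State.smul']
    ring
  have h2 : (fun t => (H t - rs a (sub t a) H) ^ 2) =
      fun t => ((H t) ^ 2 - 2 * (H t * rs a (sub t a) H)) + (rs a (sub t a) H) ^ 2 := by
    funext t; ring
  rw [h2, State.add, State.sub, State.smul, h1]
  ring

theorem varLemma (a : α) (j M : ℕ) (hj : j ≤ M) (n : ℕ → ℕ) (G : List (Option α) → ℝ) :
    av (Option α) j (fun t => AvB (Option α) n (M + 1) (fun ω =>
      (RSG a (M + 1) (bl a ω) G t - rs a (sub t a) (fun t' => RSG a (M + 1) (bl a ω) G t')) ^ 2)) ≤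
      Enp a G (pp n j) (n j) - Enp a G 0 (pp n j + n j) := by
  rw [← (av_fin j).swap]
  simp only [rs_var]
  rw [State.sub, (av_fin j).swap, (av_fin j).swap]
  have h1 := C1 a j M n G hj
  have h2 := C2 j M n (fun x => (rs a (sub x a) G) ^ 2) hj
  have h3 : Enp a G 0 (pp n j + n j) = av (Option α) (pp n j + n j) (fun x => (rs a (sub x a) G) ^ 2) := rfl
  rw [h3, ← h2]
  have h4 : av (Option α) j (fun t => AvB (Option α) n (M + 1) (fun ω => (rs a (sub t a) (fun t' => RSG a (M + 1) (bl a ω) G t')) ^ 2)) =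
      av (Option α) j (fun t => AvB (Option α) n (M + 1) (fun ω => (rs a (sub ((Tr.wv ω).ev t) a) G) ^ 2)) := by
    refine av_congr fun t ht => State.congr _ fun ω => ?_
    rw [wv_bl, rs_RSG a (sub t a) M (bl a ω) G (by simpa [ht] using hj)]
  rw [h4]
  linarith

end Resample

end DCS

namespace DCS

open Filter Topology

section Step3

variable {α : Type} [Fintype α] [Nonempty α]

set_option linter.unusedSectionVars false

/-- The space of configurations. -/
abbrev Om (α : Type) : Type := Set (List (Option α)) × (α → Set (List α))

/-- The action of trees on configurations. -/
def act4 (V : Tr (Option α)) (s : Om α) : Om α :=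
  (pb V s.1, fun b => pb (V.map (fun o : Option α => o.getD b)) (s.2 b))

/-- The weighted balanced function. -/
noncomputable def gB (ρ : ℝ) (B : Finset α) (x : List (Option α)) (s : Om α) : ℝ :=
  (ind (x ∈ s.1) - ρ) * ∏ b ∈ B, ind (sub x b ∈ s.2 b)

theorem sub_ev (V : Tr (Option α)) (x : List (Option α)) (b : α) :
    sub (V.ev x) b = (V.map (fun o : Option α => o.getD b)).ev (sub x b) := Tr.map_ev _ V x

theorem gB_act (ρ : ℝ) (B : Finset α) (V : Tr (Option α)) (x : List (Option α)) (s : Om α) :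
    gB ρ B x (act4 V s) = gB ρ B (V.ev x) s := by
  simp only [gB, act4, mem_pb, sub_ev]

theorem prod_ind_nonneg {ι : Type} (B : Finset ι) (p : ι → Prop) : 0 ≤ ∏ b ∈ B, ind (p b) :=
  Finset.prod_nonneg fun b _ => ind_nonneg _

theorem prod_ind_le_one {ι : Type} (B : Finset ι) (p : ι → Prop) : ∏ b ∈ B, ind (p b) ≤ 1 :=
  Finset.prod_le_one (fun b _ => ind_nonneg _) fun b _ => ind_le_one _

theorem gB_abs (ρ : ℝ) (B : Finset α) (x : List (Option α)) (s : Om α) :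
    |gB ρ B x s| ≤ 1 + |ρ| := by
  unfold gB
  rw [abs_mul, abs_of_nonneg (prod_ind_nonneg B _)]
  have h1 : |ind (x ∈ s.1) - ρ| ≤ 1 + |ρ| := (abs_sub _ _).trans (by gcongr; exact ind_abs_le _)
  calc _ ≤ (1 + |ρ|) * 1 := mul_le_mul h1 (prod_ind_le_one B _) (prod_ind_nonneg B _) (by positivity)
    _ = _ := mul_one _

theorem gB_bdd (ρ : ℝ) (B : Finset α) (x : List (Option α)) : Bdd (gB ρ B x) :=
  ⟨_, gB_abs ρ B x⟩

/-- Line free states with large correlation. -/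
def claim (B : Finset α) (ρ : ℝ) : Prop := ∃ E : State (Om α), ∃ κ > 0,
  (∀ V : Tr (Option α), E (fun s => ind (In 1 V s.1)) = 0) ∧ ∀ x, κ ≤ E (gB ρ B x)

theorem ind_forall {ι : Type} [Fintype ι] (p : ι → Prop) : ind (∀ i, p i) = ∏ i, ind (p i) := by
  by_cases h : ∀ i, p i
  · rw [ind_true h]
    exact (Finset.prod_eq_one fun i _ => ind_true (h i)).symm
  · rw [ind_false h]
    push Not at h
    obtain ⟨i, hi⟩ := h
    exact (Finset.prod_eq_zero (Finset.mem_univ i) (ind_false hi)).symm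

theorem freq_sum {ι : Type} (T : Finset ι) (v : ι → ℕ → ℝ) (η : ℝ) (hη : 0 < η)
    (h : ∃ᶠ n in atTop, η ≤ ∑ t ∈ T, v t n) :
    ∃ t ∈ T, ∃ η' > 0, ∃ᶠ n in atTop, η' ≤ v t n := by
  by_contra hc
  push Not at hc
  have h1 : ∀ᶠ n in atTop, ∀ t ∈ T, v t n < η / (T.card + 1) := by
    rw [Filter.eventually_all_finset]
    intro t ht
    have := hc t ht (η / (T.card + 1)) (by positivity)
    exact this
  obtain ⟨n, hn, hn2⟩ := (h.and_eventually h1).exists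
  have h2 : ∑ t ∈ T, v t n ≤ ∑ t ∈ T, η / (T.card + 1) := Finset.sum_le_sum fun t ht => (hn2 t ht).le
  rw [Finset.sum_const, nsmul_eq_mul] at h2
  have h3 : (T.card : ℝ) * (η / (T.card + 1)) < η := by
    rw [← mul_div_assoc, div_lt_iff₀ (by positivity)]
    nlinarith
  linarith

/-- the configuration attached to a set of letters -/
def Psi (t : Finset α) (X : Set (List (Option α))) : Om α :=
  (pb (Tr.pre [none]) X, fun b => {u | (b ∈ t ∧ some b :: u.map some ∉ X) ∨
    (b ∉ t ∧ some b :: u.map some ∈ X)})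

theorem weight_sum (c : α → Prop) [DecidableEq α] :
    1 - ∏ b, ind (c b) = ∑ t ∈ (Finset.univ : Finset α).powerset.erase ∅,
      ∏ b, ind ((b ∈ t ∧ ¬ c b) ∨ (b ∉ t ∧ c b)) := by
  have h1 := Finset.prod_add (fun b => ind (¬ c b)) (fun b => ind (c b)) (Finset.univ : Finset α)
  have h2 : ∏ b : α, (ind (¬ c b) + ind (c b)) = 1 :=
    Finset.prod_eq_one fun b _ => by rw [ind_not]; ring
  have h3 : ∀ t : Finset α, ∏ b, ind ((b ∈ t ∧ ¬ c b) ∨ (b ∉ t ∧ c b)) =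
      (∏ b ∈ t, ind (¬ c b)) * ∏ b ∈ Finset.univ \ t, ind (c b) := by
    intro t
    rw [← Finset.prod_sdiff (Finset.subset_univ t), mul_comm]
    congr 1
    · exact Finset.prod_congr rfl fun b hb => ind_congr (by simp [hb])
    · exact Finset.prod_congr rfl fun b hb => ind_congr (by
        have : b ∉ t := (Finset.mem_sdiff.1 hb).2
        simp [this])
  simp only [h3]
  rw [h2, ← Finset.add_sum_erase _ _ (Finset.empty_mem_powerset _)] at h1
  simp only [Finset.prod_empty, Finset.sdiff_empty, one_mul] at h1
  linarith

theorem step3 {δs : ℝ} (hδ : 0 < δs)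
    (hmax : ∀ (E : State (Set (List (Option α)))) (δ : ℝ), KK δ E → δ ≤ δs)
    (θ : ℝ) (hθ : 0 < θ) (E : State (Set (List (Option α)))) (hE : KK δs E)
    (hfr : ∃ᶠ n in atTop, θ ≤ beta E n) : ∃ ρ > δs, claim (Finset.univ : Finset α) ρ := by
  classical
  set γ := δs * θ / 4 with hγ
  have hγ0 : 0 < γ := by positivity
  set ρ := δs + γ with hρ
  refine ⟨ρ, by linarith, ?_⟩
  set e : Set (List (Option α)) → ℝ := fun X => ind ([] ∈ X) with he
  have heb : Bdd e := Bdd.ind _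
  have he0 : ∀ X, 0 ≤ e X := fun X => ind_nonneg _
  set q := E e with hq
  have hq1 : q ≤ 1 := E_ind_le_one _ _
  have hqδ : δs ≤ q := hE.2 []
  have hq0 : 0 < q := hδ.trans_le hqδ
  let N : List (Option α) → Set (List (Option α)) → ℝ := fun x X => ind (none :: x ∈ X)
  have hNb : ∀ x, Bdd (N x) := fun x => Bdd.ind _
  let W : List (Option α) → Set (List (Option α)) → ℝ := fun x X =>
    ∏ b, ind (some b :: (sub x b).map some ∈ X)
  have hWF : ∀ x X, e X * W x X = ind (Fev x X) := by
    intro x X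
    rw [Fev, ind_and, ind_forall]
  -- line freeness
  have hLF : ∀ x, E (fun X => ind (Fev x X) * N x X) = 0 := by
    intro x
    rw [← hE.1 ⟨[], fun _ => x.map (Option.map some)⟩]
    refine E.congr fun X => ?_
    rw [← ind_and]
    refine ind_congr ?_
    rw [In_one]
    have h1 : ∀ a : α, sub (x.map (Option.map some)) (some a) = (sub x a).map some := by
      intro a
      simp only [sub, List.map_map]
      apply List.map_congr_left
      intro o _
      cases o <;> rfl
    have h2 : sub (x.map (Option.map some)) (none : Option α) = x := by
      simp only [sub, List.map_map]
      conv_rhs => rw [← List.map_id x]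
      apply List.map_congr_left
      intro o _
      cases o <;> rfl
    simp only [Fev, List.nil_append, Option.forall, h1, h2]
    tauto
  -- lower density
  have hlow : ∀ᶠ n in atTop, q * δs - γ ≤ av (Option α) n (fun x => E (fun X => e X * N x X)) := by
    have hsplit : ∀ x, E (fun X => e X * N x X) = E (N x) - E (fun X => (1 - e X) * N x X) := by
      intro x
      rw [← E.sub]
      exact E.congr fun X => by ring
    have hup : ∀ᶠ n in atTop, av (Option α) n (fun x => E (fun X => (1 - e X) * N x X)) ≤
        (1 - q) * δs + γ := by
      have h1e : Bdd (fun X => 1 - e X) := (Bdd.const 1).sub heb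
      have h1e0 : ∀ X, 0 ≤ 1 - e X := fun X => by have := ind_le_one ([] ∈ X); simp only [he]; linarith
      have hE1 : E (fun X => 1 - e X) = 1 - q := by rw [E.sub, E.const]
      rcases eq_or_lt_of_le hq1 with h1 | h1
      · refine Eventually.of_forall fun n => ?_
        have : ∀ x, E (fun X => (1 - e X) * N x X) = 0 := by
          intro x
          refine E.null_of_le (fun X => mul_nonneg (h1e0 X) (ind_nonneg _)) h1e (fun X => ?_)
            (by rw [hE1, h1]; ring)
          exact mul_le_of_le_one_right (h1e0 X) (ind_le_one _)
        simp only [this, State.const]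
        rw [h1]; linarith
      · have hp : 0 < E (fun X => 1 - e X) := by rw [hE1]; linarith
        let E2 := (E.cond _ h1e h1e0 hp).map (pb (Tr.pre [none]))
        have hNT : NT 1 E2 := by
          refine NT.map_pb (fun V => ?_) _
          exact E.cond_null _ _ _ _ _ (Bdd.ind _) (fun _ => ind_nonneg _) (hE.1 V)
        filter_upwards [upper_dens hmax E2 hNT γ hγ0] with n hn
        have h2 : ∀ x, E (fun X => (1 - e X) * N x X) = (1 - q) * E2 (fun X => ind (x ∈ X)) := by
          intro x
          rw [← hE1]
          exact (E.cond_mul _ h1e h1e0 hp (fun X => N x X)).symm.trans (by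
            congr 1
            exact State.congr _ fun X => ind_congr (by
              change _ ↔ (Tr.pre [none]).ev x ∈ X
              rw [Tr.pre_ev]; rfl))
        simp only [h2, State.smul]
        nlinarith
    filter_upwards [hup] with n hn
    simp only [hsplit]
    rw [State.sub]
    have : δs ≤ av (Option α) n (fun x => E (N x)) := by
      have := (av_fin n).mono (fun x => hE.2 (none :: x))
      rwa [State.const] at this
    linarith
  have hmain : ∃ᶠ n in atTop, δs * θ / 2 ≤ ∑ t ∈ (Finset.univ : Finset α).powerset.erase ∅,
      av (Option α) n (fun x => E (fun X => e X * gB ρ Finset.univ x (Psi t X))) := by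
    refine (hfr.and_eventually hlow).mono fun n hn => ?_
    obtain ⟨hn1, hn2⟩ := hn
    have h1 : ∀ x X, ∑ t ∈ (Finset.univ : Finset α).powerset.erase ∅, e X * gB ρ Finset.univ x (Psi t X) =
        e X * N x X - ρ * e X - ind (Fev x X) * N x X + ρ * ind (Fev x X) := by
      intro x X
      rw [← hWF]
      have h2 := weight_sum (fun b => some b :: (sub x b).map some ∈ X)
      have h3 : ∀ t : Finset α, e X * gB ρ Finset.univ x (Psi t X) = e X * (N x X - ρ) *
         ∏ b, ind ((b ∈ t ∧ ¬ (some b :: (sub x b).map some ∈ X)) ∨ (b ∉ t ∧ some b :: (sub x b).map some ∈ X)) := by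
        intro t
        simp only [gB, Psi, mem_pb, Tr.pre_ev, Set.mem_ofPred_eq, mul_assoc]
        rfl
      simp only [h3]
      rw [← Finset.mul_sum, ← h2]
      ring
    have h4 : ∑ t ∈ (Finset.univ : Finset α).powerset.erase ∅,
      av (Option α) n (fun x => E (fun X => e X * gB ρ Finset.univ x (Psi t X))) =
      av (Option α) n (fun x => E (fun X => e X * N x X)) - ρ * q + ρ * beta E n := by
      rw [← State.sum]
      have : ∀ x, ∑ t ∈ (Finset.univ : Finset α).powerset.erase ∅,
         E (fun X => e X * gB ρ Finset.univ x (Psi t X)) =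
         E (fun X => e X * N x X) - ρ * q + ρ * E (fun X => ind (Fev x X)) := by
        intro x
        rw [← State.sum]
        simp only [h1]
        rw [E.add, E.sub, E.sub, E.smul, E.smul, hLF]
        ring
      simp only [this]
      rw [State.add, State.sub, State.const, State.smul]
      rfl
    rw [h4]
    nlinarith
  obtain ⟨t, -, η, hη, hfr2⟩ := freq_sum _ _ _ (by positivity) hmain
  let E4 : State (Om α) := (E.cond e heb he0 hq0).map (Psi t)
  have hE4 : ∃ᶠ n in atTop, η ≤ av (Option α) n (fun x => E4 (gB ρ Finset.univ x)) := by
    refine hfr2.mono fun n hn => ?_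
    have h1 : ∀ x, E4 (gB ρ Finset.univ x) = q⁻¹ * E (fun X => e X * gB ρ Finset.univ x (Psi t X)) :=
      fun x => rfl
    simp only [h1]
    rw [State.smul]
    have : 1 ≤ q⁻¹ := (one_le_inv₀ hq0).2 hq1
    nlinarith
  obtain ⟨E', h1, h2⟩ := factS act4 (gB ρ Finset.univ) (1 + |ρ|) (gB_abs ρ _)
    (fun V t s => gB_act _ _ _ _ _) E4 η hE4
  refine ⟨E', η, hη, fun V => h2 _ fun V' => ?_, h1⟩
  change (E.cond e heb he0 hq0) (fun X => ind (In 1 V (pb V' (pb (Tr.pre [none]) X)))) = 0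
  refine E.cond_null _ _ _ _ _ (Bdd.ind _) (fun _ => ind_nonneg _) ?_
  simp only [In_pb]
  exact hE.1 _

end Step3

end DCS

namespace DCS

open Filter Topology

section Inc

variable {α : Type} [Fintype α] [Nonempty α]

set_option linter.unusedSectionVars false

theorem sq_bound {x C : ℝ} (h : |x| ≤ C) : |x ^ 2| ≤ C ^ 2 := by
  rw [abs_pow]
  exact pow_le_pow_left₀ (abs_nonneg _) h 2

theorem Enp_abs (a : α) {G : List (Option α) → ℝ} {C : ℝ} (hG : ∀ x, |G x| ≤ C) (p h : ℕ) :
    |Enp a G p h| ≤ C ^ 2 :=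
  (av _ p).abs_le fun x => (av _ h).abs_le fun y => sq_bound ((rs a _).abs_le fun z => hG _)

theorem RSG_abs (a : α) {G : List (Option α) → ℝ} {C : ℝ} (hG : ∀ x, |G x| ≤ C) (m : ℕ)
    (u : ℕ → List α) (t : List (Option α)) : |RSG a m u G t| ≤ C :=
  (RSB a u m).abs_le fun ω => hG _

/-- Choice of the block lengths. -/
theorem blocks (a : α) (φ : List (Option α) → Om α → ℝ) (C : ℝ) (hφ : ∀ x s, |φ x s| ≤ C)
    (hact : ∀ V x s, φ x (act4 V s) = φ (V.ev x) s) (E : State (Om α)) (κ ε : ℝ) (hε : 0 < ε)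
    (hLF : ∀ V : Tr (Option α), E (fun s => ind (In 1 V s.1)) = 0) (hκ : ∀ x, κ ≤ E (φ x)) :
    ∃ (E0 : State (Om α)) (n : ℕ → ℕ), (∀ V : Tr (Option α), E0 (fun s => ind (In 1 V s.1)) = 0) ∧
      (∀ x, κ ≤ E0 (φ x)) ∧
      ∀ j, E0 (fun s => Enp a (fun x => φ x s) (pp n j) (n j) -
        Enp a (fun x => φ x s) 0 (pp n j + n j)) ≤ ε := by
  let En : ℕ → ℕ → ℝ := fun p h => E (fun s => Enp a (fun x => φ x s) p h)
  have hEnb : ∀ p h, |En p h| ≤ C ^ 2 := fun p h => E.abs_le fun s => Enp_abs a (fun x => hφ x s) p h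
  have hEnB : ∀ p, Bdd (fun n => En p (n - p)) := fun p => ⟨C ^ 2, fun n => hEnb _ _⟩
  let A : ℕ → ℝ := fun p => LIM hyp (fun n => En p (n - p))
  have hAb : BddAbove (Set.range A) := by
    refine ⟨C ^ 2, ?_⟩
    rintro _ ⟨p, rfl⟩
    exact (LIM hyp).le_of_le (hEnB p) fun n => (abs_le.1 (hEnb _ _)).2
  obtain ⟨_, ⟨p0, rfl⟩, hp0⟩ := exists_lt_of_lt_csSup (Set.range_nonempty A)
    (show sSup (Set.range A) - ε < sSup (Set.range A) by linarith)
  have hh : ∀ p, ∃ h, En (p0 + p) h ≤ En p0 (p + h) + ε := by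
    intro p
    have h1 : A (p0 + p) < A p0 + ε := by
      have := le_csSup hAb ⟨p0 + p, rfl⟩
      linarith
    have h2 : LIM hyp (fun n => En (p0 + p) (n - (p0 + p)) - En p0 (n - p0)) < ε := by
      rw [(LIM hyp).sub]; linarith
    have h3 := LIM_lt_event hyp ((hEnB _).sub (hEnB _)) h2
    obtain ⟨n, hn1, hn2⟩ := (h3.and (hyp_le (eventually_ge_atTop (p0 + p)))).exists
    refine ⟨n - (p0 + p), ?_⟩
    rw [show p + (n - (p0 + p)) = n - p0 by omega]
    linarith
  choose h hh using hh
  let P : ℕ → ℕ := fun j => Nat.rec 0 (fun _ p => p + (h p + 1)) j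
  let n : ℕ → ℕ := fun j => h (P j)
  have hpp : ∀ j, pp n j = P j := by
    intro j
    induction j with
    | zero => rfl
    | succ j ih =>
      have : pp n (j + 1) = pp n j + (n j + 1) := Finset.sum_range_succ _ _
      rw [this, ih]
  let E0 : State (Om α) := (av (Option α) p0).bind fun x => E.map (act4 (Tr.pre x))
  have hE0 : ∀ p h, E0 (fun s => Enp a (fun x => φ x s) p h) = En (p0 + p) h := by
    intro p h
    change av (Option α) p0 (fun x => E (fun s => Enp a (fun y => φ y (act4 (Tr.pre x) s)) p h)) = _
    rw [← (av_fin p0).swap]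
    refine E.congr fun s => ?_
    simp only [hact, Tr.pre_ev, Enp]
    rw [av_add p0 p]
    simp only [List.append_assoc]
  refine ⟨E0, n, fun V => ?_, fun x => ?_, fun j => ?_⟩
  · change av (Option α) p0 (fun x => E (fun s => ind (In 1 V (pb (Tr.pre x) s.1)))) = 0
    simp only [In_pb, hLF, State.const]
  · change κ ≤ av (Option α) p0 (fun y => E (fun s => φ x (act4 (Tr.pre y) s)))
    simp only [hact]
    have := (av_fin p0).mono (fun y => hκ ((Tr.pre y).ev x))
    rwa [State.const] at this
  · rw [E0.sub, hE0, hE0, hpp]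
    have := hh (P j)
    simp only [add_zero]
    change En (p0 + P j) (h (P j)) - En p0 (P j + h (P j)) ≤ ε
    linarith

theorem wv_ext {L : Type} {ω ω' : ℕ → List L} (t : List L) (h : ∀ i ≤ t.length, ω i = ω' i) :
    (Tr.wv ω).ev t = (Tr.wv ω').ev t := by
  induction t generalizing ω ω' with
  | nil => rw [Tr.wv_nil, Tr.wv_nil, h 0 (by simp)]
  | cons b t ih =>
    rw [Tr.wv_cons, Tr.wv_cons, h 0 (by simp), ih (ω := shift ω) (ω' := shift ω')]
    intro i hi
    exact h (i + 1) (by simpa using hi)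

theorem RSG_ext {a : α} {m : ℕ} {u u' : ℕ → List α} (h : ∀ i < m, u i = u' i)
    (G : List (Option α) → ℝ) (t : List (Option α)) : RSG a m u G t = RSG a m u' G t := by
  unfold RSG
  rw [RSB_ext h]

theorem gB_insert [DecidableEq α] (ρ : ℝ) {B : Finset α} {a : α} (ha : a ∉ B) (x : List (Option α)) (s : Om α) :
    gB ρ (insert a B) x s = ind (sub x a ∈ s.2 a) * gB ρ B x s := by
  unfold gB
  rw [Finset.prod_insert ha]
  ring

theorem inc_fin [DecidableEq α] (hP : Pk α) (ρ : ℝ) (B : Finset α) (a : α) (ha : a ∉ B) (E : State (Om α)) (κ : ℝ)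
    (hκ : 0 < κ) (hLF : ∀ V : Tr (Option α), E (fun s => ind (In 1 V s.1)) = 0)
    (hE : ∀ x, κ ≤ E (gB ρ (insert a B) x)) (m' : ℕ) :
    ∃ E' : State (Om α), (∀ V : Tr (Option α), E' (fun s => ind (In 1 V s.1)) = 0) ∧
      ∀ x : List (Option α), x.length ≤ m' → κ / 4 ≤ E' (gB ρ B x) := by
  set φ := gB ρ (insert a B) with hφdef
  set C := 1 + |ρ| with hC
  have hC0 : 0 < C := by positivity
  have hφ : ∀ x s, |φ x s| ≤ C := gB_abs _ _
  obtain ⟨M, π, hπ, hFT⟩ := FT hP m' (κ / (2 * C)) (by positivity)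
  set l := π * κ / 8 with hl
  have hl0 : 0 < l := by positivity
  set Q := (Fintype.card (Option α) : ℝ) ^ M with hQ
  have hK : (1:ℝ) ≤ Fintype.card (Option α) := one_le_card
  have hQ0 : 0 < Q := by positivity
  obtain ⟨E0, n, hLF0, hE0, hn⟩ := blocks a φ C hφ (fun V x s => gB_act _ _ _ _ _) E κ (l ^ 2 / Q)
    (by positivity) hLF hE
  -- abbreviations
  let R : (ℕ → List (Option α)) → Om α → List (Option α) → ℝ := fun ω s t =>
    RSG a (M + 1) (bl a ω) (fun x => φ x s) t
  let D : (ℕ → List (Option α)) → Om α → List (Option α) → ℝ := fun ω s t =>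
    R ω s t - rs a (sub t a) (fun t' => R ω s t')
  have hRb : ∀ ω s t, |R ω s t| ≤ C := fun ω s t => RSG_abs a (fun x => hφ x s) _ _ _
  have hDb : ∀ ω s t, |D ω s t| ≤ C + C := fun ω s t =>
    (abs_sub _ _).trans (add_le_add (hRb _ _ _) ((rs a _).abs_le fun t' => hRb _ _ _))
  have hRB : ∀ ω t, Bdd (fun s => R ω s t) := fun ω t => ⟨C, fun s => hRb _ _ _⟩
  have hDB : ∀ ω t, Bdd (fun s => (D ω s t) ^ 2) := fun ω t => ⟨(C+C) ^ 2, fun s => sq_bound (hDb _ _ _)⟩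
  -- variance estimate
  have hvar : ∀ y : List (Option α), y.length ≤ M →
      AvB (Option α) n (M + 1) (fun ω => E0 (fun s => (D ω s y) ^ 2)) ≤ l ^ 2 := by
    intro y hy
    rw [← (AvB_fin n (M + 1)).swap]
    have h1 := le_av (f := fun t => E0 (fun s => AvB (Option α) n (M + 1) (fun ω => (D ω s t) ^ 2)))
      (fun t => E0.nonneg ⟨(C+C) ^ 2, fun s => (AvB _ n (M+1)).abs_le fun ω => sq_bound (hDb _ _ _)⟩
        fun s => (AvB_fin _ _).nonneg fun ω => sq_nonneg _) y
    refine h1.trans ?_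
    have h2 : av (Option α) y.length (fun t => E0 (fun s => AvB (Option α) n (M + 1) (fun ω => (D ω s t) ^ 2))) ≤ l ^ 2 / Q := by
      rw [← (av_fin _).swap]
      refine le_trans ?_ (hn y.length)
      refine E0.mono ⟨(C+C)^2, fun s => (av _ _).abs_le fun t => (AvB _ n (M+1)).abs_le fun ω => sq_bound (hDb _ _ _)⟩
        (Bdd.sub ⟨C^2, fun s => Enp_abs a (fun x => hφ x s) _ _⟩ ⟨C^2, fun s => Enp_abs a (fun x => hφ x s) _ _⟩) fun s => ?_
      exact varLemma a y.length M hy n (fun x => φ x s)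
    have h3 : (Fintype.card (Option α) : ℝ) ^ y.length ≤ Q := pow_le_pow_right₀ hK hy
    calc _ ≤ Q * (l ^ 2 / Q) := mul_le_mul h3 h2 (av_nonneg fun t => E0.nonneg
            ⟨(C+C) ^ 2, fun s => (AvB _ n (M+1)).abs_le fun ω => sq_bound (hDb _ _ _)⟩
            fun s => (AvB_fin _ _).nonneg fun ω => sq_nonneg _) hQ0.le
      _ = _ := by field_simp
  -- the random set
  let Y : (ℕ → List (Option α)) → Om α → Set (List α) := fun ω s =>
    {t | M < t.length ∨ κ / 2 ≤ R ω s (t.map some)}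
  have hY : ∀ t : List α, t.length ≤ M → κ / (2 * C) ≤
      ((AvB (Option α) n (M + 1)).bind fun ω => E0.map (Y ω)) (fun X => ind (t ∈ X)) := by
    intro t ht
    change _ ≤ AvB (Option α) n (M + 1) (fun ω => E0 (fun s => ind (t ∈ Y ω s)))
    have h1 : ∀ ω : ℕ → List (Option α), κ / (2 * C) ≤ E0 (fun s => ind (t ∈ Y ω s)) := by
      intro ω
      have h2 : κ ≤ E0 (fun s => R ω s (t.map some)) := by
        change κ ≤ E0 (fun s => RSB a (bl a ω) (M + 1) (fun ω' => φ ((Tr.wv ω').ev (t.map some)) s))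
        rw [(RSB_fin a _ _).swap]
        have := (RSB_fin a (bl a ω) (M+1)).mono (fun ω' => hE0 ((Tr.wv ω').ev (t.map some)))
        rwa [State.const] at this
      have h3 : E0 (fun s => R ω s (t.map some)) ≤ E0 (fun s => κ / 2 + C * ind (t ∈ Y ω s)) := by
        refine E0.mono (hRB _ _) ((Bdd.const _).add ((Bdd.const _).mul (Bdd.ind _))) fun s => ?_
        by_cases hs : t ∈ Y ω s
        · rw [ind_true hs]
          have := (abs_le.1 (hRb ω s (t.map some))).2
          linarith
        · rw [ind_false hs]
          have : ¬ (κ / 2 ≤ R ω s (t.map some)) := fun h => hs (Or.inr h)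
          linarith
      rw [E0.add, E0.const, E0.smul] at h3
      rw [div_le_iff₀ (by positivity)]
      linarith
    have := (AvB_fin n (M+1)).mono h1
    rwa [State.const] at this
  obtain ⟨V, hV1, hV2⟩ := hFT _ hY
  let e : (ℕ → List (Option α)) → Om α → ℝ := fun ω s => ind (In m' V (Y ω s))
  let J : State ((ℕ → List (Option α)) × Om α) :=
    (AvB (Option α) n (M + 1)).bind fun ω => E0.map fun s => (ω, s)
  let eJ : (ℕ → List (Option α)) × Om α → ℝ := fun r => e r.1 r.2
  have hJe : π ≤ J eJ := hV2
  have hJ0 : 0 < J eJ := hπ.trans_le hJe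
  have heb : Bdd eJ := Bdd.ind _
  have he0 : ∀ r, 0 ≤ eJ r := fun r => ind_nonneg _
  let VK : Tr (Option α) := V.map some
  let E' : State (Om α) := (J.cond eJ heb he0 hJ0).map fun r => act4 VK (act4 (Tr.wv r.1) r.2)
  refine ⟨E', fun W => ?_, fun x hx => ?_⟩
  · change (J.cond eJ heb he0 hJ0) (fun r => ind (In 1 W (pb VK (pb (Tr.wv r.1) r.2.1)))) = 0
    refine J.cond_null _ _ _ _ _ (Bdd.ind _) (fun _ => ind_nonneg _) ?_
    change AvB (Option α) n (M + 1) (fun ω => E0 (fun s => ind (In 1 W (pb VK (pb (Tr.wv ω) s.1))))) = 0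
    simp only [In_pb, hLF0, State.const]
  -- the main estimate
  set y := VK.ev x with hy
  set u := V.ev (sub x a) with hu
  have hsy : sub y a = u := by
    rw [hy, sub_ev, Tr.map_map_some]
  have hul : u.length ≤ M := hV1 _ (by simpa using hx)
  have hyl : y.length ≤ M := by rw [← sub_length y a, hsy]; exact hul
  set y0 := u.map some with hy0
  have hsy0 : sub y0 a = u := sub_map_some _ _
  have hy0l : y0.length ≤ M := by simpa [hy0] using hul
  have heR : ∀ ω s, In m' V (Y ω s) → κ / 2 ≤ R ω s y0 := by
    intro ω s h
    rcases h (sub x a) (by simpa using hx) with h1 | h1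
    · exact absurd h1 (not_lt.2 hul)
    · exact h1
  have hg : ∀ ω s, e ω s * gB ρ B ((Tr.wv ω).ev y) s = e ω s * φ ((Tr.wv ω).ev y) s := by
    intro ω s
    by_cases h : In m' V (Y ω s)
    · have h1 := heR ω s h
      have h2 : sub ((Tr.wv ω).ev y) a ∈ s.2 a := by
        rw [wv_bl, hsy]
        by_contra hc
        have h3 : R ω s y0 = 0 := by
          change RSB a (bl a ω) (M + 1) (fun ω' => φ ((Tr.wv ω').ev y0) s) = 0
          rw [RSB_congr (g := fun _ => 0), State.const]
          intro ω' hω'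
          rw [hφdef, gB_insert ρ ha, wv_bl, hsy0, wv_ext (ω := bl a ω') (ω' := bl a ω) u fun i hi => hω' i (by omega),
            ind_false hc, zero_mul]
        linarith
      rw [hφdef, gB_insert ρ ha, ind_true h2, one_mul]
    · simp only [e, ind_false h, zero_mul]
  have hres : ∀ s, AvB (Option α) n (M + 1) (fun ω => e ω s * φ ((Tr.wv ω).ev y) s) =
      AvB (Option α) n (M + 1) (fun ω => e ω s * R ω s y) := by
    intro s
    rw [← AvB_RSB a n (M + 1) (fun ω => e ω s * φ ((Tr.wv ω).ev y) s)]
    refine State.congr _ fun ω => ?_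
    change _ = e ω s * RSB a (bl a ω) (M + 1) (fun ω' => φ ((Tr.wv ω').ev y) s)
    rw [← State.smul]
    refine RSB_congr fun ω' hω' => ?_
    congr 1
    have : ∀ t, R ω' s t = R ω s t := fun t => RSG_ext hω' _ _
    simp only [e, Y, this]
  have hbound : ∀ ω s, e ω s * (κ / 2) - ((D ω s y) ^ 2 + l ^ 2) * (2 * l)⁻¹
      - ((D ω s y0) ^ 2 + l ^ 2) * (2 * l)⁻¹ ≤ e ω s * R ω s y := by
    intro ω s
    have hamgm : ∀ d : ℝ, |d| ≤ (d ^ 2 + l ^ 2) * (2 * l)⁻¹ := by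
      intro d
      rw [← div_eq_mul_inv, le_div_iff₀ (by positivity)]
      nlinarith [sq_nonneg (|d| - l), sq_abs d]
    have h1 := hamgm (D ω s y)
    have h2 := hamgm (D ω s y0)
    have h1' := abs_nonneg (D ω s y)
    have h2' := abs_nonneg (D ω s y0)
    by_cases h : In m' V (Y ω s)
    · simp only [e, ind_true h, one_mul]
      have h3 := heR ω s h
      have h4 : R ω s y = R ω s y0 + D ω s y - D ω s y0 := by
        simp only [D, hsy, hsy0]; ring
      have h5 := neg_abs_le (D ω s y)
      have h6 := le_abs_self (D ω s y0)
      linarith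
    · simp only [e, ind_false h, zero_mul]
      linarith
  have hfin : J eJ * (κ / 4) ≤ AvB (Option α) n (M + 1) (fun ω => E0 (fun s => e ω s * R ω s y)) := by
    have h1 : ∀ ω, E0 (fun s => e ω s) * (κ / 2) - (E0 (fun s => (D ω s y) ^ 2) + l ^ 2) * (2 * l)⁻¹
        - (E0 (fun s => (D ω s y0) ^ 2) + l ^ 2) * (2 * l)⁻¹ ≤ E0 (fun s => e ω s * R ω s y) := by
      intro ω
      have heω : Bdd (fun s => e ω s) := Bdd.ind _
      have := E0.mono (((heω.mul (Bdd.const (κ/2))).sub (((hDB ω y).add (Bdd.const (l^2))).mul (Bdd.const (2*l)⁻¹))).sub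
        (((hDB ω y0).add (Bdd.const (l^2))).mul (Bdd.const (2*l)⁻¹))) (heω.mul (hRB ω y)) (hbound ω)
      rw [E0.sub, E0.sub, E0.smul', E0.smul', E0.smul', E0.add, E0.add, E0.const] at this
      exact this
    have h2 := (AvB_fin n (M + 1)).mono h1
    rw [State.sub, State.sub, State.smul', State.smul', State.smul', State.add, State.add, State.const] at h2
    have h3 := hvar y hyl
    have h4 := hvar y0 hy0l
    have h5 : ∀ d : ℝ, d ≤ l ^ 2 → (d + l ^ 2) * (2 * l)⁻¹ ≤ l := by
      intro d hd
      rw [← div_eq_mul_inv, div_le_iff₀ (by positivity)]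
      nlinarith
    have h6 := h5 _ h3
    have h7 := h5 _ h4
    have h8 : AvB (Option α) n (M + 1) (fun ω => E0 (fun s => e ω s)) = J eJ := rfl
    rw [h8] at h2
    have h9 : 2 * l ≤ J eJ * (κ / 4) := by
      rw [hl]
      nlinarith
    linarith
  have hE' : E' (gB ρ B x) = (J eJ)⁻¹ * AvB (Option α) n (M + 1) (fun ω => E0 (fun s => e ω s * R ω s y)) := by
    have h1 : E' (gB ρ B x) = (J eJ)⁻¹ * AvB (Option α) n (M + 1) (fun ω => E0 (fun s =>
        e ω s * gB ρ B x (act4 VK (act4 (Tr.wv ω) s)))) := rfl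
    rw [h1]
    congr 1
    simp only [gB_act]
    simp only [← hy, hg]
    rw [← (AvB_fin n (M+1)).swap, ← (AvB_fin n (M+1)).swap]
    exact E0.congr hres
  rw [hE', ← div_eq_inv_mul, le_div_iff₀ hJ0]
  linarith

theorem inc [DecidableEq α] (hP : Pk α) (ρ : ℝ) (B : Finset α) (a : α) (ha : a ∉ B)
    (h : claim (insert a B) ρ) : claim B ρ := by
  obtain ⟨E, κ, hκ, hLF, hE⟩ := h
  choose F hF1 hF2 using inc_fin hP ρ B a ha E κ hκ hLF hE
  refine ⟨slim F, κ / 4, by positivity, fun V => ?_, fun x => ?_⟩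
  · change LIM hyp (fun n => F n (fun s => ind (In 1 V s.1))) = 0
    simp only [hF1, State.const]
  · refine slim_ge F (gB_bdd _ _ _) ?_
    filter_upwards [eventually_ge_atTop x.length] with m hm
    exact hF2 m x hm

theorem Pk_option (hP : Pk α) : Pk (Option α) := by
  classical
  by_contra hc
  obtain ⟨δs, hδ, hex, hmax⟩ := exists_dstar hc
  obtain ⟨θ, hθ, E, hE, hfr⟩ := step2 hP hδ hex
  obtain ⟨ρ, hρ, hcl⟩ := step3 hδ hmax θ hθ E hE hfr
  have hall : ∀ B : Finset α, claim B ρ → claim (∅ : Finset α) ρ := by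
    intro B
    induction B using Finset.induction_on with
    | empty => exact id
    | insert a B ha ih => exact fun h => ih (inc hP ρ B a ha h)
  obtain ⟨E', κ, hκ, hLF, hE'⟩ := hall _ hcl
  have h1 : KK (ρ + κ) (E'.map Prod.fst) := by
    refine ⟨fun V => hLF V, fun t => ?_⟩
    have h2 := hE' t
    have h3 : E' (gB ρ ∅ t) = E' (fun s => ind (t ∈ s.1)) - ρ := by
      conv_rhs => rw [← E'.const ρ, ← E'.sub]
      exact E'.congr fun s => by simp [gB]
    simp only [State.map_apply]
    linarith
  have := hmax _ _ h1
  linarith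

end Inc

end DCS

namespace DCS

open Filter Topology

theorem Pk_equiv {K L : Type} (e : K ≃ L) (h : Pk K) : Pk L := by
  intro E κ hκ hNT hc
  refine h (E.map fun X => {t | t.map e ∈ X}) κ hκ (fun V => ?_) fun t => hc (t.map e)
  refine State.null_of_le E (fun X => ind_nonneg _) (Bdd.ind _) (fun X => ?_) (hNT (V.map e))
  refine ind_mono fun hX t ht => ?_
  have h1 := hX (t.map e.symm) (by simpa using ht)
  change (V.ev (t.map e.symm)).map e ∈ X at h1
  rw [Tr.map_ev] at h1
  simpa using h1

theorem Pk_fin (n : ℕ) : Pk (Fin (n + 1)) := by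
  induction n with
  | zero => exact Pk_equiv (Equiv.ofUnique Unit (Fin 1)) Pk_unit
  | succ n ih => exact Pk_equiv (finSuccEquiv (n + 1)).symm (Pk_option ih)

theorem ncard_le_av {K : Type} [Fintype K] [Nonempty K] (n : ℕ) (A : Set (List K)) :
    (Set.ncard {x ∈ A | x.length = n} : ℝ) ≤ (Fintype.card K : ℝ) ^ n * av K n (fun t => ind (t ∈ A)) := by
  induction n generalizing A with
  | zero =>
    rw [pow_zero, one_mul, av_zero]
    by_cases h : [] ∈ A
    · rw [ind_true h]
      have : {x ∈ A | x.length = 0} ⊆ {[]} := by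
        rintro x ⟨_, hx⟩
        simpa using hx
      exact_mod_cast (Set.ncard_le_ncard this).trans (by simp)
    · rw [ind_false h]
      have : {x ∈ A | x.length = 0} = ∅ := by
        ext x
        constructor
        · rintro ⟨hxA, hx⟩
          have : x = [] := by simpa using hx
          subst this
          exact h hxA
        · intro hx; exact hx.elim
      rw [this]; simp
  | succ n ih =>
    have hfin : ∀ b : K, {x ∈ {x | b :: x ∈ A} | x.length = n}.Finite := fun b =>
      (List.finite_length_eq K n).subset fun x hx => hx.2
    have h1 : {x ∈ A | x.length = n + 1} ⊆ ⋃ b : K, (fun x => b :: x) '' {x ∈ {x | b :: x ∈ A} | x.length = n} := by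
      rintro x ⟨hxA, hx⟩
      cases x with
      | nil => simp at hx
      | cons b x =>
        refine Set.mem_iUnion.2 ⟨b, x, ⟨hxA, by simpa using hx⟩, rfl⟩
    have h2 : Set.ncard {x ∈ A | x.length = n + 1} ≤ ∑ b : K, Set.ncard {x ∈ {x | b :: x ∈ A} | x.length = n} :=
      (Set.ncard_le_ncard h1 (Set.finite_iUnion fun b => (hfin b).image _)).trans
        ((Set.ncard_iUnion_le_of_fintype _).trans
          (Finset.sum_le_sum fun b _ => Set.ncard_image_le (hfin b)))
    have h3 : (Set.ncard {x ∈ A | x.length = n + 1} : ℝ) ≤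
        ∑ b : K, (Set.ncard {x ∈ {x | b :: x ∈ A} | x.length = n} : ℝ) := by exact_mod_cast h2
    refine h3.trans ((Finset.sum_le_sum fun b _ => ih {x | b :: x ∈ A}).trans (le_of_eq ?_))
    rw [← Finset.mul_sum, av_succ, unif_apply, pow_succ, mul_assoc, mul_inv_cancel_left₀ card_pos.ne']
    rfl

theorem flatten_app {k : ℕ} (m : ℕ) : ∀ (u : ℕ → List (Option (Fin k))) (a : ℕ → Fin k),
    ((List.range m).map fun i => subst (none :: u i) (a i)).flatten = app u ((List.range m).map a) := by
  induction m with
  | zero => intro u a; rfl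
  | succ m ih =>
    intro u a
    rw [List.range_succ_eq_map]
    have := ih (shift u) (fun i => a (i + 1))
    simp only [List.map_cons, List.flatten_cons, List.map_map, app_cons]
    simp only [Function.comp_def]
    rw [← this]
    rfl

end DCS

/-- **Theorem A** (density Carlson–Simpson theorem). -/
theorem density_carlson_simpson (k : ℕ) (hk : 2 ≤ k) (A : Set (Word k))
    (hA : 0 < Filter.atTop.limsup (fun n : ℕ => dens k n A)) :
    ∃ (c : Word k) (w : ℕ → VWord k),
      (∀ n : ℕ, IsLeftVar (w n)) ∧ csSetInf c w ⊆ A := by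
  obtain ⟨j, rfl⟩ : ∃ j, k = j + 1 := ⟨k - 1, by omega⟩
  have hb : Filter.atTop.IsCoboundedUnder (· ≤ ·) (fun n : ℕ => dens (j + 1) n A) :=
    Filter.isCoboundedUnder_le_of_le Filter.atTop (x := 0) fun n => by unfold dens; positivity
  have hfr := Filter.frequently_lt_of_lt_limsup hb (half_lt_self hA)
  obtain ⟨V, hV⟩ := DCS.inf_tree (DCS.Pk_fin j) A _ (half_pos hA) (hfr.mono fun n hn => by
    refine hn.le.trans ?_
    have h := DCS.ncard_le_av n A
    rw [Fintype.card_fin] at h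
    unfold dens
    rw [div_le_iff₀ (by positivity), mul_comm]
    exact h)
  refine ⟨V.c, fun n => none :: V.u n, fun n => rfl, ?_⟩
  rintro x (rfl | ⟨n, a, rfl⟩)
  · have h := hV []
    rwa [DCS.Tr.ev_nil] at h
  · unfold csWord
    rw [DCS.flatten_app]
    exact hV _
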